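/- arXiv:math/0206178 — 2 statements merged into one kernel-verified Lean document; each statement's English description precedes it below -/
import Mathlib

section
/- One has lim_{n→∞} (log|r_n|)/n = log λ1 and lim_{n→∞} (log|u_n|)/n = lim_{n→∞} (log|w_n|)/n = lim_{n→∞} (log|v_n|)/n = log λ3, where λ1, λ2, λ3 are the three real roots of λ^3 − 188λ^2 − 2368λ + 4 ordered by increasing absolute value (λ1 is the unique root in (0,1) and λ3 the unique root greater than 1). -/
noncomputable section

open Filter


/-- `a₀(n)` from recursion (1). -/
def a0 (x : ℚ) : ℚ := 41218*x^3 - 48459*x^2 + 20010*x - 2871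

/-- `a₁(n)` from recursion (1). -/
def a1 (x : ℚ) : ℚ := 2*(48802112*x^9 + 89030880*x^8 + 36002654*x^7 - 24317344*x^6
  - 19538418*x^5 + 1311365*x^4 + 3790503*x^3 + 460056*x^2 - 271701*x - 60291)

/-- `a₂(n)` from recursion (1). -/
def a2 (x : ℚ) : ℚ := 3874492*x^8 - 2617900*x^7 - 3144314*x^6 + 2947148*x^5
  + 647130*x^4 - 1182926*x^3 + 115771*x^2 + 170716*x - 44541

def b0 (x : ℚ) : ℚ := -a0 (-x)
def b1 (x : ℚ) : ℚ := a2 (-x)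
def b2 (x : ℚ) : ℚ := -a1 (-x)

/-- The auxiliary difference equation (8), imposed for all integers `n ≥ 2`. -/
def Rec2 (y : ℕ → ℚ) : Prop := ∀ n : ℕ, 2 ≤ n →
  (n : ℚ)*((n : ℚ) + 1)^5 * b0 ((n : ℚ) - 1) * y (n+1) - 2*(n : ℚ)*b1 (n : ℚ) * y n
    - b2 (n : ℚ) * y (n-1) + 2*((n : ℚ) - 1)^5*(2*(n : ℚ) - 1)*b0 (n : ℚ) * y (n-2) = 0

/-- The very-well-poised hypergeometric series `r_n`
(the summation index `k ≥ 1` is written as `k + 1` with `k : ℕ`). -/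
def rr (n : ℕ) : ℝ := (Nat.factorial n : ℝ)^4 * ∑' k : ℕ,
  (((k : ℝ) + 1) + (n : ℝ)/2)
    * (∏ j ∈ Finset.Icc 1 n, (((k : ℝ) + 1) - (j : ℝ)))
    * (∏ j ∈ Finset.Icc 1 n, (((k : ℝ) + 1) + (n : ℝ) + (j : ℝ)))
    / (∏ j ∈ Finset.range (n+1), (((k : ℝ) + 1) + (j : ℝ))^6)

/-!
A positive solution of the recurrence has ratios `ρ n = y (n + 1) / y n` satisfying
`ρ (n + 2) = A n + B n / ρ (n + 1) - C n / (ρ (n + 1) ρ n)` with `A n → 188`, `B n → 2368`,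
`C n → 4`. Since `A n ≥ 50` and `C n ≤ B n`, all ratios with `n ≥ 2` are at least `50`, where
the limiting recursion is a contraction, so `ρ n` tends to its fixed point `λ₃`.

The terms of `rr n` are nonnegative, vanish for `k < n`, and by Stirling's formula are
`exp (n * rate ((k + 1) / n))` up to powers of `k + 1`. Hence `log (rr n) / n` tends to the maximum
of `rate` on `(1, ∞)`. The critical point `t` is unique and satisfies
`2 s (s - 2) (s + 1) = 1` for `s = t (t + 1)`, and eliminating `t` shows that `exp (rate t)` is a
root of `λ³ - 188 λ² - 2368 λ + 4` in `(0, 1)`.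
-/

open Real Polynomial
open scoped Nat Topology

/-! ### Exponential growth of sequences and of series -/

theorem tendsto_zero_of_succ_le_mul_add {f d : ℕ → ℝ} {q : ℝ} (hq0 : 0 ≤ q) (hq1 : q < 1)
    (hf : ∀ n, 0 ≤ f n) (hd : Tendsto d atTop (𝓝 0))
    (h : ∀ᶠ n in atTop, f (n + 1) ≤ q * f n + d n) : Tendsto f atTop (𝓝 0) := by
  refine tendsto_order.2 ⟨fun a ha ↦ .of_forall fun n ↦ ha.trans_le (hf n), fun ε hε ↦ ?_⟩
  have hδ : 0 < (1 - q) * (ε / 2) := mul_pos (by linarith) (by linarith)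
  obtain ⟨N, hN⟩ := eventually_atTop.1 (h.and (hd.eventually_le_const hδ))
  have bound (k : ℕ) : f (k + N) ≤ q ^ k * f N + ε / 2 := by
    induction k with
    | zero => simpa using (half_pos hε).le
    | succ k ih =>
      obtain ⟨hstep, hsmall⟩ := hN (k + N) (by lia)
      calc f (k + 1 + N) = f (k + N + 1) := by rw [add_right_comm]
        _ ≤ q * f (k + N) + d (k + N) := hstep
        _ ≤ q * (q ^ k * f N + ε / 2) + (1 - q) * (ε / 2) := by gcongr
        _ = q ^ (k + 1) * f N + ε / 2 := by ring
  have hgeom : Tendsto (fun k ↦ q ^ k * f N + ε / 2) atTop (𝓝 (ε / 2)) := by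
    simpa using ((tendsto_pow_atTop_nhds_zero_of_lt_one hq0 hq1).mul_const (f N)).add_const (ε / 2)
  rw [← map_add_atTop_eq_nat N, eventually_map]
  filter_upwards [hgeom.eventually_lt_const (half_lt_self hε)] with k hk
  exact (bound k).trans_lt hk

theorem tendsto_zero_of_add_two_le_mul_add_mul_add {f d : ℕ → ℝ} {a b : ℝ} (ha : 0 ≤ a)
    (hb : 0 ≤ b) (hab : a + b < 1) (hf : ∀ n, 0 ≤ f n) (hd : Tendsto d atTop (𝓝 0))
    (h : ∀ᶠ n in atTop, f (n + 2) ≤ a * f (n + 1) + b * f n + d n) : Tendsto f atTop (𝓝 0) := by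
  -- `c` is chosen so that `f (n + 1) + c * f n` contracts by the factor `q = (1 + a + b) / 2`.
  set c := (1 - a + b) / 2 with hc
  have hc0 : 0 ≤ c := by linarith
  have hbc : b ≤ (1 + a + b) / 2 * c := by nlinarith
  have hsum : Tendsto (fun n ↦ f (n + 1) + c * f n) atTop (𝓝 0) := by
    refine tendsto_zero_of_succ_le_mul_add (q := (1 + a + b) / 2) (by linarith) (by linarith)
      (fun n ↦ add_nonneg (hf _) (mul_nonneg hc0 (hf n))) hd ?_
    filter_upwards [h] with n hn
    have hbcf : b * f n ≤ (1 + a + b) / 2 * c * f n := by gcongr; exact hf n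
    calc f (n + 2) + c * f (n + 1)
        ≤ (1 + a + b) / 2 * f (n + 1) + b * f n + d n := by rw [hc]; linarith
      _ ≤ (1 + a + b) / 2 * (f (n + 1) + c * f n) + d n := by linarith
  rw [← tendsto_add_atTop_iff_nat 1]
  exact squeeze_zero (fun n ↦ hf _) (fun n ↦ le_add_of_nonneg_right (mul_nonneg hc0 (hf n))) hsum

theorem tendsto_log_abs_div_of_tendsto_ratio {y : ℕ → ℝ} {l : ℝ} (hl : l ≠ 0)
    (h : Tendsto (fun n ↦ y (n + 1) / y n) atTop (𝓝 l)) :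
    Tendsto (fun n ↦ log |y n| / n) atTop (𝓝 (log |l|)) := by
  simp only [log_abs]
  have hdiff : Tendsto (fun n ↦ log (y (n + 1)) - log (y n)) atTop (𝓝 (log l)) := by
    refine (h.log hl).congr' ?_
    filter_upwards [h.eventually_ne hl] with n hn
    rw [div_ne_zero_iff] at hn
    exact log_div hn.1 hn.2
  have hinit : Tendsto (fun n : ℕ ↦ (n : ℝ)⁻¹ * log (y 0)) atTop (𝓝 0) := by
    simpa using tendsto_inv_atTop_nhds_zero_nat.mul_const (log (y 0))
  have hmean := hdiff.cesaro.add hinit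
  rw [add_zero] at hmean
  refine hmean.congr fun n ↦ ?_
  rw [Finset.sum_range_sub fun i ↦ log (y i)]
  ring

theorem tendsto_log_div_natCast_of_tendsto_div {x : ℕ → ℝ} {t : ℝ} (ht : t ≠ 0)
    (hx : Tendsto (fun n ↦ x n / n) atTop (𝓝 t)) :
    Tendsto (fun n ↦ log (x n) / n) atTop (𝓝 0) := by
  have hlog_nat : Tendsto (fun n : ℕ ↦ log n / n) atTop (𝓝 0) :=
    isLittleO_log_id_atTop.tendsto_div_nhds_zero.comp tendsto_natCast_atTop_atTop
  have hsum := ((hx.log ht).mul tendsto_inv_atTop_nhds_zero_nat).add hlog_nat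
  rw [mul_zero, add_zero] at hsum
  refine hsum.congr' ?_
  filter_upwards [hx.eventually_ne ht] with n hn
  rw [div_ne_zero_iff] at hn
  rw [log_div hn.1 hn.2]
  ring

theorem tendsto_log_tsum_div {T : ℕ → ℕ → ℝ} {a : ℕ → ℝ} {K : ℕ → ℕ} {l : ℝ} (hl : 0 < l)
    (hT : ∀ n k, 0 ≤ T n k) (ha : Summable a) (hle : ∀ᶠ n in atTop, ∀ k, T n k ≤ l ^ n * a k)
    (hpos : ∀ᶠ n in atTop, 0 < T n (K n))
    (hK : Tendsto (fun n ↦ log (T n (K n)) / n) atTop (𝓝 (log l))) :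
    Tendsto (fun n ↦ log (∑' k, T n k) / n) atTop (𝓝 (log l)) := by
  have hupper : Tendsto (fun n : ℕ ↦ log l + log (∑' k, a k) / n) atTop (𝓝 (log l)) := by
    simpa using (tendsto_const_div_atTop_nhds_zero_nat (log (∑' k, a k))).const_add (log l)
  have hsummable {n : ℕ} (h : ∀ k, T n k ≤ l ^ n * a k) : Summable (T n) :=
    .of_nonneg_of_le (hT n) h (ha.mul_left _)
  refine tendsto_of_tendsto_of_tendsto_of_le_of_le' hK hupper ?_ ?_
  · filter_upwards [hle, hpos] with n hle hpos
    gcongr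
    exact (hsummable hle).le_tsum (K n) fun k _ ↦ hT n k
  · filter_upwards [hle, hpos, eventually_gt_atTop 0] with n hle hpos hn
    have hsum_pos : 0 < ∑' k, T n k := (hsummable hle).tsum_pos (hT n) (K n) hpos
    have hsum_le : ∑' k, T n k ≤ l ^ n * ∑' k, a k := by
      rw [← tsum_mul_left]
      exact (hsummable hle).tsum_le_tsum hle (ha.mul_left _)
    have ha_ne : ∑' k, a k ≠ 0 := fun h ↦ by simp [h, hsum_pos.not_ge] at hsum_le
    calc log (∑' k, T n k) / n ≤ log (l ^ n * ∑' k, a k) / n := by gcongr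
      _ = log l + log (∑' k, a k) / n := by
        rw [log_mul (by positivity) ha_ne, log_pow]
        field_simp

section ThirdOrderRecurrence

theorem abs_inv_sub_inv_le {R r l : ℝ} (hR : 0 < R) (hr : R ≤ r) (hl : R ≤ l) :
    |r⁻¹ - l⁻¹| ≤ |r - l| / R ^ 2 := by
  have hr0 := hR.trans_le hr
  have hl0 := hR.trans_le hl
  rw [inv_sub_inv hr0.ne' hl0.ne', abs_div, abs_sub_comm, abs_of_pos (mul_pos hr0 hl0), sq]
  gcongr

theorem abs_inv_mul_inv_sub_inv_sq_le {R r s l : ℝ} (hR : 0 < R) (hr : R ≤ r) (hs : R ≤ s)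
    (hl : R ≤ l) : |r⁻¹ * s⁻¹ - l⁻¹ ^ 2| ≤ |r - l| / R ^ 3 + |s - l| / R ^ 3 := by
  have hs0 := hR.trans_le hs
  have hl0 := hR.trans_le hl
  calc |r⁻¹ * s⁻¹ - l⁻¹ ^ 2| = |(r⁻¹ - l⁻¹) * s⁻¹ + (s⁻¹ - l⁻¹) * l⁻¹| := by ring_nf
    _ ≤ |r⁻¹ - l⁻¹| * s⁻¹ + |s⁻¹ - l⁻¹| * l⁻¹ := by
      refine (abs_add_le _ _).trans_eq ?_
      rw [abs_mul, abs_mul, abs_of_pos (inv_pos.2 hs0), abs_of_pos (inv_pos.2 hl0)]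
    _ ≤ |r - l| / R ^ 2 * R⁻¹ + |s - l| / R ^ 2 * R⁻¹ := by
      gcongr
      exacts [abs_inv_sub_inv_le hR hr hl, abs_inv_sub_inv_le hR hs hl]
    _ = |r - l| / R ^ 3 + |s - l| / R ^ 3 := by field_simp

theorem abs_add_mul_inv_sub_mul_inv_sub_le {R r s l A B C a b c : ℝ} (hR : 0 < R) (hr : R ≤ r)
    (hs : R ≤ s) (hl : R ≤ l) (hroot : l = a + b * l⁻¹ - c * l⁻¹ ^ 2) :
    |A + B * r⁻¹ - C * (r⁻¹ * s⁻¹) - l| ≤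
      (|b| / R ^ 2 + |c| / R ^ 3) * |r - l| + |c| / R ^ 3 * |s - l| +
        (|A - a| + |B - b| * R⁻¹ + |C - c| * R⁻¹ ^ 2) := by
  have hr0 := hR.trans_le hr
  have hs0 := hR.trans_le hs
  have hrs : |r⁻¹ * s⁻¹| ≤ R⁻¹ ^ 2 := by
    rw [abs_of_pos (by positivity), sq]
    gcongr
  have hr_inv : |r⁻¹| ≤ R⁻¹ := by
    rw [abs_of_pos (by positivity)]
    gcongr
  calc |A + B * r⁻¹ - C * (r⁻¹ * s⁻¹) - l|
      = |(A - a) + (B - b) * r⁻¹ - (C - c) * (r⁻¹ * s⁻¹)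
          + b * (r⁻¹ - l⁻¹) - c * (r⁻¹ * s⁻¹ - l⁻¹ ^ 2)| := by
        congr 1
        linear_combination -hroot
    _ ≤ |A - a| + |B - b| * |r⁻¹| + |C - c| * |r⁻¹ * s⁻¹|
          + |b| * |r⁻¹ - l⁻¹| + |c| * |r⁻¹ * s⁻¹ - l⁻¹ ^ 2| := by
        simp only [← abs_mul]
        refine (abs_sub _ _).trans (add_le_add_left ?_ _)
        refine (abs_add_le _ _).trans (add_le_add_left ?_ _)
        exact (abs_sub _ _).trans (add_le_add_left (abs_add_le _ _) _)
    _ ≤ |A - a| + |B - b| * R⁻¹ + |C - c| * R⁻¹ ^ 2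
          + |b| * (|r - l| / R ^ 2) + |c| * (|r - l| / R ^ 3 + |s - l| / R ^ 3) := by
        gcongr
        exacts [abs_inv_sub_inv_le hR hr hl, abs_inv_mul_inv_sub_inv_sq_le hR hr hs hl]
    _ = _ := by ring

variable {A B C : ℕ → ℝ} {a b c R l : ℝ}

theorem tendsto_of_ratio_recurrence {ρ : ℕ → ℝ}
    (hρ : ∀ᶠ n in atTop, ρ (n + 2) = A n + B n * (ρ (n + 1))⁻¹ - C n * ((ρ (n + 1))⁻¹ * (ρ n)⁻¹))
    (hA : Tendsto A atTop (𝓝 a)) (hB : Tendsto B atTop (𝓝 b)) (hC : Tendsto C atTop (𝓝 c))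
    (hR : 0 < R) (hρR : ∀ᶠ n in atTop, R ≤ ρ n) (hlR : R ≤ l)
    (hroot : l ^ 3 = a * l ^ 2 + b * l - c) (hcontr : |b| / R ^ 2 + 2 * |c| / R ^ 3 < 1) :
    Tendsto ρ atTop (𝓝 l) := by
  have hroot' : l = a + b * l⁻¹ - c * l⁻¹ ^ 2 := by
    have hl0 := (hR.trans_le hlR).ne'
    field_simp
    linear_combination hroot
  have herr : Tendsto (fun n ↦ |A n - a| + |B n - b| * R⁻¹ + |C n - c| * R⁻¹ ^ 2) atTop (𝓝 0) := by
    simpa only [sub_self, abs_zero, zero_mul, add_zero] using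
      ((hA.sub_const a).abs.add ((hB.sub_const b).abs.mul_const R⁻¹)).add
        ((hC.sub_const c).abs.mul_const (R⁻¹ ^ 2))
  rw [tendsto_iff_dist_tendsto_zero]
  refine tendsto_zero_of_add_two_le_mul_add_mul_add (a := |b| / R ^ 2 + |c| / R ^ 3)
    (b := |c| / R ^ 3) (by positivity) (by positivity) (by linarith [mul_div_assoc 2 |c| (R ^ 3)])
    (fun _ ↦ dist_nonneg) herr ?_
  filter_upwards [hρ, hρR, (tendsto_add_atTop_nat 1).eventually hρR] with n hn hs hr
  simp only [Real.dist_eq, hn]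
  exact abs_add_mul_inv_sub_mul_inv_sub_le hR hr hs hlR hroot'

variable {y : ℕ → ℝ}

theorem mul_le_of_recurrence {n : ℕ}
    (hy : y (n + 3) = A n * y (n + 2) + B n * y (n + 1) - C n * y n)
    (hC : 0 ≤ C n) (hCB : C n ≤ B n) (hn0 : 0 ≤ y n) (hn1 : y n ≤ y (n + 1)) :
    A n * y (n + 2) ≤ y (n + 3) := by
  have hCy : C n * y n ≤ B n * y (n + 1) := mul_le_mul hCB hn1 hn0 (hC.trans hCB)
  rw [hy]
  linarith

theorem nonneg_and_monotone_of_recurrence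
    (hy : ∀ n, y (n + 3) = A n * y (n + 2) + B n * y (n + 1) - C n * y n)
    (hA : ∀ n, 1 ≤ A n) (hC : ∀ n, 0 ≤ C n) (hCB : ∀ n, C n ≤ B n)
    (h0 : 0 ≤ y 0) (h01 : y 0 ≤ y 1) (h12 : y 1 ≤ y 2) : (∀ n, 0 ≤ y n) ∧ Monotone y := by
  have key (n : ℕ) : 0 ≤ y n ∧ y n ≤ y (n + 1) ∧ y (n + 1) ≤ y (n + 2) := by
    induction n with
    | zero => exact ⟨h0, h01, h12⟩
    | succ n ih =>
      obtain ⟨hn0, hn1, hn2⟩ := ih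
      refine ⟨hn0.trans hn1, hn2, ?_⟩
      calc y (n + 2) ≤ A n * y (n + 2) :=
            le_mul_of_one_le_left (hn0.trans (hn1.trans hn2)) (hA n)
        _ ≤ y (n + 3) := mul_le_of_recurrence (hy n) (hC n) (hCB n) hn0 hn1
  exact ⟨fun n ↦ (key n).1, monotone_nat_of_le_succ fun n ↦ (key n).2.1⟩

theorem tendsto_log_abs_div_of_recurrence
    (hy : ∀ n, y (n + 3) = A n * y (n + 2) + B n * y (n + 1) - C n * y n)
    (hA : Tendsto A atTop (𝓝 a)) (hB : Tendsto B atTop (𝓝 b)) (hC : Tendsto C atTop (𝓝 c))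
    (hR : 1 ≤ R) (hRA : ∀ n, R ≤ A n) (hC0 : ∀ n, 0 ≤ C n) (hCB : ∀ n, C n ≤ B n)
    (h0 : 0 ≤ y 0) (h01 : y 0 ≤ y 1) (h1 : 0 < y 1) (h12 : y 1 ≤ y 2)
    (hRl : R ≤ l) (hroot : l ^ 3 = a * l ^ 2 + b * l - c)
    (hcontr : |b| / R ^ 2 + 2 * |c| / R ^ 3 < 1) :
    Tendsto (fun n ↦ log |y n| / n) atTop (𝓝 (log l)) := by
  obtain ⟨hnonneg, hmono⟩ := nonneg_and_monotone_of_recurrence hy (fun n ↦ hR.trans (hRA n)) hC0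
    hCB h0 h01 h12
  have hpos (n : ℕ) : 0 < y (n + 1) := h1.trans_le (hmono (Nat.le_add_left 1 n))
  have hR0 : 0 < R := one_pos.trans_le hR
  have hratio : ∀ᶠ n in atTop, R ≤ y (n + 1) / y n := by
    rw [← map_add_atTop_eq_nat 2, eventually_map]
    refine .of_forall fun n ↦ (le_div_iff₀ (hpos (n + 1))).2 ?_
    calc R * y (n + 2) ≤ A n * y (n + 2) := mul_le_mul_of_nonneg_right (hRA n) (hnonneg _)
      _ ≤ y (n + 3) := mul_le_of_recurrence (hy n) (hC0 n) (hCB n) (hnonneg n) (hmono n.le_succ)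
  have hrec : ∀ᶠ n in atTop, y (n + 3) / y (n + 2) = A n + B n * (y (n + 2) / y (n + 1))⁻¹ -
      C n * ((y (n + 2) / y (n + 1))⁻¹ * (y (n + 1) / y n)⁻¹) := by
    filter_upwards [eventually_ne_atTop 0] with n hn
    obtain ⟨k, rfl⟩ := Nat.exists_eq_succ_of_ne_zero hn
    have hk2 := (hpos (k + 1)).ne'
    have hk3 := (hpos (k + 2)).ne'
    rw [hy]
    field_simp
  rw [← abs_of_pos (hR0.trans_le hRl)]
  exact tendsto_log_abs_div_of_tendsto_ratio (hR0.trans_le hRl).ne'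
    (tendsto_of_ratio_recurrence hrec hA hB hC hR0 hratio hRl hroot hcontr)

end ThirdOrderRecurrence

/-! ### The recurrence `Rec2` -/

theorem tendsto_eval_natCast_div_eval_natCast {P Q : ℝ[X]} (hP : P ≠ 0) (hQ : Q ≠ 0)
    (h : P.natDegree = Q.natDegree) :
    Tendsto (fun n : ℕ ↦ P.eval (n : ℝ) / Q.eval (n : ℝ)) atTop
      (𝓝 (P.leadingCoeff / Q.leadingCoeff)) :=
  (Polynomial.div_tendsto_atTop_leadingCoeff_div_of_degree_eq P Q
    (by rw [degree_eq_natDegree hP, degree_eq_natDegree hQ, h])).comp tendsto_natCast_atTop_atTop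

/-- Coefficient of `y (m + 3)` in the equation `Rec2` at `n = m + 2`, written in the form
`q₃ y (m + 3) = q₂ y (m + 2) + q₁ y (m + 1) - q₀ y m`, as a polynomial in `m`. The shift by `2`
makes `q₀`, `q₃`, `q₂ - 50 q₃` and `q₁ - q₀` polynomials with nonnegative coefficients. -/
def recPoly₃ : ℝ[X] := (X + 2) * (X + 3) ^ 5 *
  (41218 * (X + 1) ^ 3 + 48459 * (X + 1) ^ 2 + 20010 * (X + 1) + 2871)

/-- Coefficient `q₂` of `y (m + 2)` in the normalisation of `recPoly₃`. -/
def recPoly₂ : ℝ[X] := 2 * (X + 2) * (3874492 * (X + 2) ^ 8 + 2617900 * (X + 2) ^ 7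
  - 3144314 * (X + 2) ^ 6 - 2947148 * (X + 2) ^ 5 + 647130 * (X + 2) ^ 4 + 1182926 * (X + 2) ^ 3
  + 115771 * (X + 2) ^ 2 - 170716 * (X + 2) - 44541)

/-- Coefficient `q₁` of `y (m + 1)` in the normalisation of `recPoly₃`. -/
def recPoly₁ : ℝ[X] := 2 * (48802112 * (X + 2) ^ 9 - 89030880 * (X + 2) ^ 8
  + 36002654 * (X + 2) ^ 7 + 24317344 * (X + 2) ^ 6 - 19538418 * (X + 2) ^ 5
  - 1311365 * (X + 2) ^ 4 + 3790503 * (X + 2) ^ 3 - 460056 * (X + 2) ^ 2 - 271701 * (X + 2) + 60291)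

/-- Coefficient `q₀` of `-y m` in the normalisation of `recPoly₃`. -/
def recPoly₀ : ℝ[X] := 2 * (X + 1) ^ 5 * (2 * X + 3) *
  (41218 * (X + 2) ^ 3 + 48459 * (X + 2) ^ 2 + 20010 * (X + 2) + 2871)

theorem Rec2.eval_recPoly₃_mul {y : ℕ → ℚ} (hy : Rec2 y) (m : ℕ) :
    recPoly₃.eval (m : ℝ) * y (m + 3) = recPoly₂.eval (m : ℝ) * y (m + 2)
      + recPoly₁.eval (m : ℝ) * y (m + 1) - recPoly₀.eval (m : ℝ) * y m := by
  have h := congrArg (Rat.cast : ℚ → ℝ) (hy (m + 2) (Nat.le_add_left 2 m))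
  simp only [Nat.add_sub_cancel, show m + 2 - 1 = m + 1 from rfl, b0, b1, b2, a0, a1, a2] at h
  push_cast at h
  simp only [recPoly₀, recPoly₁, recPoly₂, recPoly₃, eval_add, eval_sub, eval_mul, eval_pow,
    eval_X, eval_ofNat, eval_one]
  linear_combination h

theorem eval_recPoly₃_pos {x : ℝ} (hx : 0 ≤ x) : 0 < recPoly₃.eval x := by
  simp only [recPoly₃, eval_add, eval_mul, eval_pow, eval_X, eval_ofNat, eval_one]
  positivity

theorem eval_recPoly₀_nonneg {x : ℝ} (hx : 0 ≤ x) : 0 ≤ recPoly₀.eval x := by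
  simp only [recPoly₀, eval_add, eval_mul, eval_pow, eval_X, eval_ofNat, eval_one]
  positivity

theorem eval_recPoly₀_le_eval_recPoly₁ {x : ℝ} (hx : 0 ≤ x) :
    recPoly₀.eval x ≤ recPoly₁.eval x := by
  rw [← sub_nonneg]
  simp only [recPoly₀, recPoly₁, eval_add, eval_sub, eval_mul, eval_pow, eval_X, eval_ofNat,
    eval_one]
  ring_nf
  positivity

theorem fifty_mul_eval_recPoly₃_le_eval_recPoly₂ {x : ℝ} (hx : 0 ≤ x) :
    50 * recPoly₃.eval x ≤ recPoly₂.eval x := by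
  rw [← sub_nonneg]
  simp only [recPoly₂, recPoly₃, eval_add, eval_sub, eval_mul, eval_pow, eval_X, eval_ofNat,
    eval_one]
  ring_nf
  positivity

theorem natDegree_recPoly₃ : recPoly₃.natDegree = 9 := by unfold recPoly₃; compute_degree!
theorem natDegree_recPoly₂ : recPoly₂.natDegree = 9 := by unfold recPoly₂; compute_degree!
theorem natDegree_recPoly₁ : recPoly₁.natDegree = 9 := by unfold recPoly₁; compute_degree!
theorem natDegree_recPoly₀ : recPoly₀.natDegree = 9 := by unfold recPoly₀; compute_degree!

theorem leadingCoeff_recPoly₃ : recPoly₃.leadingCoeff = 41218 := by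
  rw [leadingCoeff, natDegree_recPoly₃]; unfold recPoly₃; compute_degree!

theorem leadingCoeff_recPoly₂ : recPoly₂.leadingCoeff = 188 * 41218 := by
  rw [leadingCoeff, natDegree_recPoly₂]; unfold recPoly₂; compute_degree!

theorem leadingCoeff_recPoly₁ : recPoly₁.leadingCoeff = 2368 * 41218 := by
  rw [leadingCoeff, natDegree_recPoly₁]; unfold recPoly₁; compute_degree!

theorem leadingCoeff_recPoly₀ : recPoly₀.leadingCoeff = 4 * 41218 := by
  rw [leadingCoeff, natDegree_recPoly₀]; unfold recPoly₀; compute_degree!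

theorem tendsto_eval_div_eval_recPoly₃ {P : ℝ[X]} {c : ℝ} (hdeg : P.natDegree = 9)
    (hlead : P.leadingCoeff = c * 41218) :
    Tendsto (fun n : ℕ ↦ P.eval (n : ℝ) / recPoly₃.eval (n : ℝ)) atTop (𝓝 c) := by
  have hP : P ≠ 0 := ne_zero_of_natDegree_gt (n := 0) (by lia)
  have hQ : recPoly₃ ≠ 0 := ne_zero_of_natDegree_gt (n := 0) (by simp [natDegree_recPoly₃])
  have h := tendsto_eval_natCast_div_eval_natCast hP hQ (hdeg.trans natDegree_recPoly₃.symm)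
  rwa [hlead, leadingCoeff_recPoly₃, mul_div_cancel_right₀ c (by norm_num)] at h

theorem fifty_le_of_root {l : ℝ} (hroot : l ^ 3 - 188 * l ^ 2 - 2368 * l + 4 = 0) (hl : 1 < l) :
    50 ≤ l := by
  by_contra! h
  nlinarith [mul_pos (sub_pos.2 hl) (sub_pos.2 h), mul_pos (sub_pos.2 hl) (one_pos.trans hl)]

theorem Rec2.tendsto_log_abs_div {y : ℕ → ℚ} (hy : Rec2 y) (h0 : 0 ≤ y 0) (h01 : y 0 ≤ y 1)
    (h1 : 0 < y 1) (h12 : y 1 ≤ y 2) {l : ℝ} (hroot : l ^ 3 - 188 * l ^ 2 - 2368 * l + 4 = 0)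
    (hl : 1 < l) : Tendsto (fun n ↦ log |(y n : ℝ)| / n) atTop (𝓝 (log l)) := by
  have hpos (n : ℕ) : 0 < recPoly₃.eval (n : ℝ) := eval_recPoly₃_pos n.cast_nonneg
  refine tendsto_log_abs_div_of_recurrence (y := fun n ↦ (y n : ℝ))
    (A := fun n ↦ recPoly₂.eval (n : ℝ) / recPoly₃.eval (n : ℝ))
    (B := fun n ↦ recPoly₁.eval (n : ℝ) / recPoly₃.eval (n : ℝ))
    (C := fun n ↦ recPoly₀.eval (n : ℝ) / recPoly₃.eval (n : ℝ)) (R := 50) (fun n ↦ ?_)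
    (tendsto_eval_div_eval_recPoly₃ natDegree_recPoly₂ leadingCoeff_recPoly₂)
    (tendsto_eval_div_eval_recPoly₃ natDegree_recPoly₁ leadingCoeff_recPoly₁)
    (tendsto_eval_div_eval_recPoly₃ natDegree_recPoly₀ leadingCoeff_recPoly₀)
    (by norm_num) (fun n ↦ ?_) (fun n ↦ ?_) (fun n ↦ ?_) (mod_cast h0) (mod_cast h01)
    (mod_cast h1) (mod_cast h12) (fifty_le_of_root hroot hl) (by linear_combination hroot)
    (by norm_num)
  · have hne := (hpos n).ne'
    field_simp
    linear_combination hy.eval_recPoly₃_mul n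
  · exact (le_div_iff₀ (hpos n)).2 (fifty_mul_eval_recPoly₃_le_eval_recPoly₂ n.cast_nonneg)
  · exact div_nonneg (eval_recPoly₀_nonneg n.cast_nonneg) (hpos n).le
  · exact div_le_div_of_nonneg_right (eval_recPoly₀_le_eval_recPoly₁ n.cast_nonneg) (hpos n).le

/-! ### Stirling estimates for the summands -/

theorem prod_Icc_add_one_sub {R : Type*} [CommRing R] (k n : ℕ) :
    ∏ j ∈ Finset.Icc 1 n, ((k : R) + 1 - j) = k.descFactorial n := by
  induction n with
  | zero => simp
  | succ n ih =>
    rw [Finset.prod_Icc_succ_top (Nat.le_add_left 1 n), ih, Nat.descFactorial_succ, Nat.cast_mul]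
    rcases le_or_gt n k with h | h
    · push_cast [h]
      ring
    · simp [Nat.descFactorial_of_lt h]

theorem prod_Icc_natCast_add {R : Type*} [CommSemiring R] (k n : ℕ) :
    ∏ j ∈ Finset.Icc 1 n, ((k : R) + j) = (k + 1).ascFactorial n := by
  induction n with
  | zero => simp
  | succ n ih =>
    rw [Finset.prod_Icc_succ_top (Nat.le_add_left 1 n), ih, Nat.ascFactorial_succ]
    push_cast
    ring

theorem log_descFactorial {k n : ℕ} (h : n ≤ k) :
    log (k.descFactorial n) = log k ! - log (k - n)! := by
  rw [← Nat.factorial_mul_descFactorial h, Nat.cast_mul, log_mul (by positivity)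
    (mod_cast (Nat.descFactorial_pos.2 h).ne'), add_sub_cancel_left]

theorem log_ascFactorial (k n : ℕ) :
    log ((k + 1).ascFactorial n) = log (k + n)! - log k ! := by
  rw [← Nat.factorial_mul_ascFactorial, Nat.cast_mul, log_mul (by positivity)
    (mod_cast (Nat.ascFactorial_pos k n).ne'), add_sub_cancel_left]

theorem log_factorial_succ (m : ℕ) : log (m + 1)! = log (m + 1) + log m ! := by
  rw [Nat.factorial_succ, Nat.cast_mul, log_mul (by positivity) (by positivity), Nat.cast_succ]

theorem log_factorial_sub_mem_Icc {m : ℕ} (hm : m ≠ 0) :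
    log m ! - (m * log m - m + log m / 2) ∈ Set.Icc 0 1 := by
  constructor
  · have hπ : 0 ≤ log (2 * π) := log_nonneg (by linarith [pi_gt_three])
    linarith [Stirling.le_log_factorial_stirling hm]
  · obtain ⟨k, rfl⟩ := Nat.exists_eq_succ_of_ne_zero hm
    have h : log (Stirling.stirlingSeq (k + 1)) ≤ log (Stirling.stirlingSeq 1) :=
      Stirling.log_stirlingSeq'_antitone k.zero_le
    rw [Stirling.log_stirlingSeq_formula, Stirling.stirlingSeq_one,
      log_mul two_ne_zero (by positivity), log_div (by positivity) (exp_ne_zero _),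
      log_div (exp_ne_zero _) (by positivity), log_sqrt zero_le_two, log_exp] at h
    linarith

/-- The `k`-th term of the series `rr n`, the prefactor `n !⁴` included; as there, `k` stands for
the summation index `k + 1` of the paper. -/
def summand (n k : ℕ) : ℝ := (n ! : ℝ) ^ 4 * ((((k : ℝ) + 1) + (n : ℝ) / 2)
  * (∏ j ∈ Finset.Icc 1 n, (((k : ℝ) + 1) - (j : ℝ)))
  * (∏ j ∈ Finset.Icc 1 n, (((k : ℝ) + 1) + (n : ℝ) + (j : ℝ)))
  / (∏ j ∈ Finset.range (n + 1), (((k : ℝ) + 1) + (j : ℝ)) ^ 6))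

theorem rr_eq_tsum_summand (n : ℕ) : rr n = ∑' k, summand n k :=
  tsum_mul_left.symm

theorem summand_eq (n k : ℕ) : summand n k = (n ! : ℝ) ^ 4 * ((k + 1 + n / 2) *
    k.descFactorial n * (k + n + 1 + 1).ascFactorial n / ((k + 1).ascFactorial (n + 1)) ^ 6) := by
  have hasc := prod_Icc_natCast_add (R := ℝ) (k + n + 1) n
  rw [summand, prod_Icc_add_one_sub, Finset.prod_pow, Nat.ascFactorial_eq_prod_range (k + 1),
    ← hasc]
  push_cast
  simp only [add_right_comm (k : ℝ) 1 (n : ℝ)]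

theorem summand_nonneg (n k : ℕ) : 0 ≤ summand n k := by
  rw [summand_eq]
  positivity

theorem summand_eq_zero {n k : ℕ} (h : k < n) : summand n k = 0 := by
  simp [summand_eq, Nat.descFactorial_of_lt h]

theorem summand_pos {n k : ℕ} (h : n ≤ k) : 0 < summand n k := by
  have hdesc := Nat.descFactorial_pos.2 h
  rw [summand_eq]
  positivity

theorem log_summand {n k : ℕ} (h : n ≤ k) : log (summand n k) = log (k + 1 + n / 2) + 4 * log n !
    + 7 * log k ! + log (k + n + 1 + n)! - log (k - n)! - 7 * log (k + n + 1)! := by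
  have hdesc := Nat.descFactorial_pos.2 h
  rw [summand_eq, log_mul (by positivity) (by positivity), log_div (by positivity) (by positivity),
    log_mul (by positivity) (by positivity), log_mul (by positivity) (by positivity), log_pow,
    log_pow, log_descFactorial h, log_ascFactorial, log_ascFactorial, ← add_assoc k n 1]
  push_cast
  ring

/-- Exponential growth rate of the summands: `summand n k = exp (n * rate ((k + 1) / n) + O(log k))`
for `n ≤ k`. -/
def rate (t : ℝ) : ℝ := 7 * (t * log t) + (t + 2) * log (t + 2) - (t - 1) * log (t - 1)
  - 7 * ((t + 1) * log (t + 1))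

theorem mul_rate_div {n x : ℝ} (hn : 0 < n) (hx : n < x) :
    n * rate (x / n) = 4 * (n * log n) + 7 * (x * log x) + (x + 2 * n) * log (x + 2 * n)
      - (x - n) * log (x - n) - 7 * ((x + n) * log (x + n)) := by
  have hx0 : 0 < x := hn.trans hx
  have hxn : x - n ≠ 0 := (sub_pos.2 hx).ne'
  rw [rate, show x / n + 2 = (x + 2 * n) / n by field_simp,
    show x / n - 1 = (x - n) / n by field_simp, show x / n + 1 = (x + n) / n by field_simp,
    log_div hx0.ne' hn.ne', log_div (by positivity) hn.ne', log_div hxn hn.ne',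
    log_div (by positivity) hn.ne']
  field_simp
  ring

theorem log_mem_Icc_of_le_mul {c x y : ℝ} (hx : 0 < x) (hxy : x ≤ y) (hy : y ≤ c * x) :
    log y ∈ Set.Icc (log x) (log c + log x) := by
  have hc : 0 < c := pos_of_mul_pos_left ((hx.trans_le hxy).trans_le hy) hx.le
  refine ⟨log_le_log hx hxy, ?_⟩
  rw [← log_mul hc.ne' hx.ne']
  exact log_le_log (hx.trans_le hxy) hy

-- The term `-2 * log (k + 1)` of the upper bound makes it summable over `k` after exponentiation.
theorem log_summand_mem_Icc {n k : ℕ} (hn : n ≠ 0) (h : n ≤ k) :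
    log (summand n k) ∈ Set.Icc (n * rate ((k + 1) / n) - 12 - 6 * log (k + 1))
      (n * rate ((k + 1) / n) + 14 - 2 * log (k + 1)) := by
  obtain ⟨m, rfl⟩ := Nat.exists_eq_add_of_le h
  have hn1 : (1 : ℝ) ≤ n := mod_cast Nat.one_le_iff_ne_zero.2 hn
  have hrate : n * rate ((n + m + 1) / n) = 4 * (n * log n)
      + 7 * ((n + m + 1) * log (n + m + 1)) + (n + m + n + 1 + n) * log (n + m + n + 1 + n)
      - (m + 1) * log (m + 1) - 7 * ((n + m + n + 1) * log (n + m + n + 1)) := by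
    rw [mul_rate_div (by linarith) (by linarith)]
    ring_nf
  have hx0 : (0 : ℝ) < n + m + 1 := by linarith
  have hweight := log_mem_Icc_of_le_mul (c := 2) (y := n + m + 1 + n / 2) hx0 (by linarith)
    (by linarith)
  have hden := log_mem_Icc_of_le_mul (c := 2) (y := n + m + n + 1) hx0 (by linarith) (by linarith)
  have hasc := log_mem_Icc_of_le_mul (c := 3) (y := n + m + n + 1 + n) hx0 (by linarith)
    (by linarith)
  have hlog_n := log_le_log (by linarith) (show (n : ℝ) ≤ n + m + 1 by linarith)
  have hlog_m := log_le_log (by linarith) (show (m + 1 : ℝ) ≤ n + m + 1 by linarith)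
  have hlog_n0 := log_nonneg hn1
  have hlog_m0 : 0 ≤ log ((m : ℝ) + 1) := log_nonneg (by linarith)
  have hlog_two : log 2 ≤ 1 := by linarith [log_two_lt_d9]
  have hlog_three : log 3 ≤ 2 := by linarith [log_le_sub_one_of_pos (zero_lt_three (α := ℝ))]
  have stirling_n := log_factorial_sub_mem_Icc hn
  have stirling_k := log_factorial_sub_mem_Icc (n + m).succ_ne_zero
  have stirling_m := log_factorial_sub_mem_Icc m.succ_ne_zero
  have stirling_den := log_factorial_sub_mem_Icc (n + m + n).succ_ne_zero
  have stirling_asc := log_factorial_sub_mem_Icc (m := n + m + n + 1 + n) (by lia)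
  rw [log_summand h, Nat.add_sub_cancel_left]
  rw [Nat.succ_eq_add_one, log_factorial_succ] at stirling_k stirling_m
  simp only [Set.mem_Icc] at *
  push_cast at *
  constructor <;> linarith

/-! ### The maximum of the rate function -/

/-- The critical point polynomial: for `t > 1` the derivative of `rate` vanishes at `t` iff
`t⁷ (t + 2) = (t - 1) (t + 1)⁷`, and after division by `2 t + 1` this equation becomes
`critPoly s = 0` in the variable `s = t (t + 1)`. -/
def critPoly (s : ℝ) : ℝ := 2 * s * (s - 2) * (s + 1) - 1

theorem sub_one_mul_add_one_pow_sub (t : ℝ) :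
    (t - 1) * (t + 1) ^ 7 - t ^ 7 * (t + 2) = (2 * t + 1) * critPoly (t * (t + 1)) := by
  rw [critPoly]
  ring

theorem monotoneOn_critPoly : MonotoneOn critPoly (Set.Ici 2) := by
  intro s hs t ht hst
  rw [Set.mem_Ici] at hs ht
  unfold critPoly
  gcongr

theorem critPoly_mul_add_one_le {s t : ℝ} (hs : 1 < s) (hst : s ≤ t) :
    critPoly (s * (s + 1)) ≤ critPoly (t * (t + 1)) := by
  have ht : 1 < t := hs.trans_le hst
  refine monotoneOn_critPoly ?_ ?_ (by gcongr) <;> rw [Set.mem_Ici] <;> nlinarith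

theorem exists_critPoly_mul_add_one_eq_zero : ∃ t : ℝ, 1 < t ∧ critPoly (t * (t + 1)) = 0 := by
  have hcont : Continuous fun t : ℝ ↦ critPoly (t * (t + 1)) := by unfold critPoly; fun_prop
  obtain ⟨t, ht, h0⟩ := intermediate_value_Ioo one_le_two hcont.continuousOn
    (show (0 : ℝ) ∈ Set.Ioo _ _ by norm_num [critPoly])
  exact ⟨t, ht.1, h0⟩

theorem hasDerivAt_rate {t : ℝ} (ht : 1 < t) :
    HasDerivAt rate (log (t ^ 7 * (t + 2)) - log ((t - 1) * (t + 1) ^ 7)) t := by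
  have ht1 : t - 1 ≠ 0 := (sub_pos.2 ht).ne'
  have h := (((hasDerivAt_mul_log (x := t) (by positivity)).const_mul 7).add
    ((hasDerivAt_mul_log (x := t + 2) (by positivity)).comp_add_const t 2)).sub
    ((hasDerivAt_mul_log ht1).comp_sub_const t 1) |>.sub
    (((hasDerivAt_mul_log (x := t + 1) (by positivity)).comp_add_const t 1).const_mul 7)
  refine h.congr_deriv ?_
  rw [log_mul (by positivity) (by positivity), log_mul ht1 (by positivity), log_pow, log_pow]
  push_cast
  ring

theorem deriv_rate_nonneg {t : ℝ} (ht : 1 < t) (h : critPoly (t * (t + 1)) ≤ 0) :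
    0 ≤ deriv rate t := by
  have hdiff := sub_one_mul_add_one_pow_sub t
  rw [(hasDerivAt_rate ht).deriv, sub_nonneg]
  refine log_le_log (mul_pos (sub_pos.2 ht) (by positivity)) ?_
  linarith [mul_nonpos_of_nonneg_of_nonpos (show 0 ≤ 2 * t + 1 by linarith) h]

theorem deriv_rate_nonpos {t : ℝ} (ht : 1 < t) (h : 0 ≤ critPoly (t * (t + 1))) :
    deriv rate t ≤ 0 := by
  have hdiff := sub_one_mul_add_one_pow_sub t
  rw [(hasDerivAt_rate ht).deriv, sub_nonpos]
  refine log_le_log (by positivity) ?_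
  linarith [mul_nonneg (show 0 ≤ 2 * t + 1 by linarith) h]

theorem rate_le_of_critPoly_eq_zero {t₀ t : ℝ} (ht₀ : 1 < t₀) (h₀ : critPoly (t₀ * (t₀ + 1)) = 0)
    (ht : 1 < t) : rate t ≤ rate t₀ := by
  have hdiff : DifferentiableOn ℝ rate (Set.Ioi 1) := fun x hx ↦
    (hasDerivAt_rate hx).differentiableAt.differentiableWithinAt
  have hIci : Set.Ici t₀ ⊆ Set.Ioi 1 := Set.Ici_subset_Ioi.2 ht₀
  rcases le_total t t₀ with h | h
  · have hmono : MonotoneOn rate (Set.Ioc 1 t₀) := by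
      refine monotoneOn_of_deriv_nonneg (convex_Ioc 1 t₀)
        (hdiff.continuousOn.mono Set.Ioc_subset_Ioi_self)
        (hdiff.mono (interior_subset.trans Set.Ioc_subset_Ioi_self)) fun x hx ↦ ?_
      obtain ⟨hx1, hxt₀⟩ := interior_subset hx
      exact deriv_rate_nonneg hx1 (h₀ ▸ critPoly_mul_add_one_le hx1 hxt₀)
    exact hmono ⟨ht, h⟩ ⟨ht₀, le_rfl⟩ h
  · have hanti : AntitoneOn rate (Set.Ici t₀) := by
      refine antitoneOn_of_deriv_nonpos (convex_Ici t₀) (hdiff.continuousOn.mono hIci)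
        (hdiff.mono (interior_subset.trans hIci)) fun x hx ↦ ?_
      have hxt₀ : t₀ ≤ x := interior_subset hx
      exact deriv_rate_nonpos (hIci hxt₀) (h₀ ▸ critPoly_mul_add_one_le ht₀ hxt₀)
    exact hanti Set.self_mem_Ici h h

theorem rate_eq_log_div {t : ℝ} (ht : 1 < t) (h : critPoly (t * (t + 1)) = 0) :
    rate t = log ((t + 2) ^ 2 * (t - 1) / (t + 1) ^ 7) := by
  have ht1 : t - 1 ≠ 0 := (sub_pos.2 ht).ne'
  have hcrit : t ^ 7 * (t + 2) = (t - 1) * (t + 1) ^ 7 := by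
    linear_combination -sub_one_mul_add_one_pow_sub t - (2 * t + 1) * h
  have hlog := congrArg log hcrit
  rw [log_mul (by positivity) (by positivity), log_mul ht1 (by positivity), log_pow,
    log_pow] at hlog
  rw [rate, log_div (by positivity) (by positivity), log_mul (by positivity) ht1, log_pow, log_pow]
  push_cast at hlog ⊢
  linear_combination t * hlog

theorem add_one_pow_eq_of_critPoly_eq_zero {t s : ℝ} (hs : s = t * (t + 1)) (h : critPoly s = 0) :
    (t + 1) ^ 7 = (t + 2) ^ 2 * (t - 1) * (s ^ 2 * (2 * s + 1) ^ 3) := by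
  subst hs
  rw [critPoly] at h
  linear_combination
    -(1 + 3 * t + 7 * t ^ 2 + 19 * t ^ 3 + 36 * t ^ 4 + 38 * t ^ 5 + 20 * t ^ 6 + 4 * t ^ 7) * h

theorem root_inv_of_critPoly_eq_zero {s x : ℝ} (h : critPoly s = 0)
    (hx : x = s ^ 2 * (2 * s + 1) ^ 3) (hx0 : x ≠ 0) :
    x⁻¹ ^ 3 - 188 * x⁻¹ ^ 2 - 2368 * x⁻¹ + 4 = 0 := by
  rw [critPoly] at h
  have hx_mod : x = 21 + 94 * s + 87 * s ^ 2 := by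
    linear_combination hx + (21 + 10 * s + 4 * s ^ 2) * h
  have hcubic : 4 * x ^ 3 - 2368 * x ^ 2 - 188 * x + 1 = 0 := by
    rw [hx_mod]
    linear_combination (1011191 + 4824324 * s + 5585922 * s ^ 2 + 1317006 * s ^ 3) * h
  field_simp
  linear_combination hcubic

theorem eq_of_root_mem_Ioo {x y : ℝ} (hx : x ^ 3 - 188 * x ^ 2 - 2368 * x + 4 = 0)
    (hy : y ^ 3 - 188 * y ^ 2 - 2368 * y + 4 = 0) (hx01 : x ∈ Set.Ioo 0 1)
    (hy01 : y ∈ Set.Ioo 0 1) : x = y := by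
  obtain ⟨hx0, hx1⟩ := hx01
  obtain ⟨hy0, hy1⟩ := hy01
  have hmul : (x - y) * (x ^ 2 + x * y + y ^ 2 - 188 * (x + y) - 2368) = 0 := by
    linear_combination hx - hy
  refine sub_eq_zero.1 ((mul_eq_zero.1 hmul).resolve_right (ne_of_lt ?_))
  nlinarith

theorem rate_eq_log_of_root {t l : ℝ} (ht : 1 < t) (h : critPoly (t * (t + 1)) = 0)
    (hroot : l ^ 3 - 188 * l ^ 2 - 2368 * l + 4 = 0) (hl : l ∈ Set.Ioo 0 1) : rate t = log l := by
  obtain ⟨s, hs⟩ : ∃ s, s = t * (t + 1) := ⟨_, rfl⟩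
  obtain ⟨x, hx⟩ : ∃ x, x = s ^ 2 * (2 * s + 1) ^ 3 := ⟨_, rfl⟩
  have hs1 : 1 < s := by nlinarith
  have hx1 : 1 < x := by
    rw [hx]
    exact one_lt_mul_of_lt_of_le (one_lt_pow₀ hs1 two_ne_zero) (one_le_pow₀ (by linarith))
  have hx0 : x ≠ 0 := (one_pos.trans hx1).ne'
  have ht1 : t - 1 ≠ 0 := (sub_pos.2 ht).ne'
  rw [← hs] at h
  rw [eq_of_root_mem_Ioo hroot (root_inv_of_critPoly_eq_zero h hx hx0) hl
      ⟨inv_pos.2 (one_pos.trans hx1), inv_lt_one_of_one_lt₀ hx1⟩, rate_eq_log_div ht (hs ▸ h),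
    add_one_pow_eq_of_critPoly_eq_zero hs h, ← hx]
  congr 1
  field_simp

/-! ### The limits -/

theorem tendsto_log_summand_div {K : ℕ → ℕ} {t : ℝ} (ht : 1 < t)
    (hK : Tendsto (fun n ↦ (K n : ℝ) / n) atTop (𝓝 t)) :
    Tendsto (fun n ↦ log (summand n (K n)) / n) atTop (𝓝 (rate t)) := by
  have hK1 : Tendsto (fun n ↦ ((K n : ℝ) + 1) / n) atTop (𝓝 t) := by
    simpa only [add_div, add_zero] using hK.add tendsto_one_div_atTop_nhds_zero_nat
  have hlog := tendsto_log_div_natCast_of_tendsto_div (one_pos.trans ht).ne' hK1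
  have hrate := (hasDerivAt_rate ht).continuousAt.tendsto.comp hK1
  have hlower := (hrate.sub (tendsto_const_div_atTop_nhds_zero_nat 12)).sub (hlog.const_mul 6)
  have hupper := (hrate.add (tendsto_const_div_atTop_nhds_zero_nat 14)).sub (hlog.const_mul 2)
  simp only [mul_zero, sub_zero, add_zero] at hlower hupper
  have hle : ∀ᶠ n in atTop, n ≠ 0 ∧ n ≤ K n := by
    filter_upwards [hK.eventually_const_lt ht, eventually_ne_atTop 0] with n hn hn0
    rw [one_lt_div (by positivity)] at hn
    exact ⟨hn0, mod_cast hn.le⟩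
  refine tendsto_of_tendsto_of_tendsto_of_le_of_le' hlower hupper ?_ ?_ <;>
    filter_upwards [hle] with n ⟨hn0, hnK⟩
  · rw [le_div_iff₀ (by positivity)]
    refine Eq.trans_le ?_ (log_summand_mem_Icc hn0 hnK).1
    simp only [Function.comp]
    field_simp
  · rw [div_le_iff₀ (by positivity)]
    refine (log_summand_mem_Icc hn0 hnK).2.trans_eq ?_
    simp only [Function.comp]
    field_simp

theorem summand_le_pow_mul {l : ℝ} (hl : 0 < l) (hrate : ∀ t, 1 < t → rate t ≤ log l) {n : ℕ}
    (hn : n ≠ 0) (k : ℕ) : summand n k ≤ l ^ n * (exp 14 * (1 / ((k : ℝ) + 1) ^ 2)) := by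
  rcases lt_or_ge k n with h | h
  · rw [summand_eq_zero h]
    positivity
  have hlog : log (l ^ n * (exp 14 * (1 / ((k : ℝ) + 1) ^ 2)))
      = n * log l + 14 - 2 * log (k + 1) := by
    rw [log_mul (by positivity) (by positivity), log_mul (by positivity) (by positivity), log_exp,
      one_div, log_inv, log_pow, log_pow]
    push_cast
    ring
  have ht : 1 < ((k : ℝ) + 1) / n := by
    rw [one_lt_div (by positivity)]
    exact_mod_cast Nat.lt_succ_of_le h
  rw [← log_le_log_iff (summand_pos h) (by positivity), hlog]
  refine (log_summand_mem_Icc hn h).2.trans ?_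
  gcongr
  exact hrate _ ht

theorem tendsto_log_abs_rr_div {l : ℝ} (hroot : l ^ 3 - 188 * l ^ 2 - 2368 * l + 4 = 0)
    (hl : l ∈ Set.Ioo 0 1) : Tendsto (fun n ↦ log |rr n| / n) atTop (𝓝 (log l)) := by
  obtain ⟨t, ht, hcrit⟩ := exists_critPoly_mul_add_one_eq_zero
  have hrate : rate t = log l := rate_eq_log_of_root ht hcrit hroot hl
  have hK : Tendsto (fun n : ℕ ↦ (⌊t * n⌋₊ : ℝ) / n) atTop (𝓝 t) :=
    (tendsto_nat_floor_mul_div_atTop (by linarith)).comp tendsto_natCast_atTop_atTop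
  have hsummable : Summable fun k : ℕ ↦ exp 14 * (1 / ((k : ℝ) + 1) ^ 2) := by
    refine .mul_left _ ?_
    exact_mod_cast (summable_nat_add_iff 1).2 (summable_one_div_nat_pow.2 one_lt_two)
  simp only [log_abs, rr_eq_tsum_summand]
  refine tendsto_log_tsum_div (K := fun n ↦ ⌊t * n⌋₊) hl.1 summand_nonneg hsummable ?_ ?_
    (hrate ▸ tendsto_log_summand_div ht hK)
  · filter_upwards [eventually_ne_atTop 0] with n hn k
    exact summand_le_pow_mul hl.1
      (fun x hx ↦ hrate ▸ rate_le_of_critPoly_eq_zero ht hcrit hx) hn k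
  · exact .of_forall fun n ↦ summand_pos (Nat.le_floor (le_mul_of_one_le_left n.cast_nonneg ht.le))

/-- `lim (log |r_n|)/n = log λ₁` and
`lim (log |u_n|)/n = lim (log |w_n|)/n = lim (log |v_n|)/n = log λ₃`, where `λ₁` is the
unique root of `λ³ − 188λ² − 2368λ + 4` in `(0, 1)` and `λ₃` its unique root greater
than `1`. -/
theorem stmt13
    (u w v : ℕ → ℚ)
    (hu : Rec2 u) (hw : Rec2 w) (hv : Rec2 v)
    (hu0 : u 0 = 1) (hu1 : u 1 = 9) (hu2 : u 2 = 469)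
    (hw0 : w 0 = 0) (hw1 : w 1 = 33) (hw2 : w 2 = 6125/4)
    (hv0 : v 0 = 0) (hv1 : v 1 = 49) (hv2 : v 2 = 74463/32)
    (lam1 : ℝ) (hlam1root : lam1^3 - 188*lam1^2 - 2368*lam1 + 4 = 0)
    (hlam1mem : lam1 ∈ Set.Ioo (0 : ℝ) 1)
    (lam3 : ℝ) (hlam3root : lam3^3 - 188*lam3^2 - 2368*lam3 + 4 = 0)
    (hlam3mem : 1 < lam3) :
    Tendsto (fun n : ℕ => Real.log |rr n| / (n : ℝ)) atTop (nhds (Real.log lam1)) ∧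
    Tendsto (fun n : ℕ => Real.log |(u n : ℝ)| / (n : ℝ)) atTop (nhds (Real.log lam3)) ∧
    Tendsto (fun n : ℕ => Real.log |(w n : ℝ)| / (n : ℝ)) atTop (nhds (Real.log lam3)) ∧
    Tendsto (fun n : ℕ => Real.log |(v n : ℝ)| / (n : ℝ)) atTop (nhds (Real.log lam3)) := by
  refine ⟨tendsto_log_abs_rr_div hlam1root hlam1mem,
    hu.tendsto_log_abs_div ?_ ?_ ?_ ?_ hlam3root hlam3mem,
    hw.tendsto_log_abs_div ?_ ?_ ?_ ?_ hlam3root hlam3mem,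
    hv.tendsto_log_abs_div ?_ ?_ ?_ ?_ hlam3root hlam3mem⟩ <;>
  norm_num [hu0, hu1, hu2, hw0, hw1, hw2, hv0, hv1, hv2]
end
end

section
/- One has lim_{n→∞} (log|r̃_n|)/n = log λ1 and lim_{n→∞} (log|ũ_n|)/n = lim_{n→∞} (log|w̃_n|)/n = lim_{n→∞} (log|ṽ_n|)/n = log λ3, where λ1, λ2, λ3 are the three real roots of λ^3 − 188λ^2 − 2368λ + 4 ordered by increasing absolute value (λ1 is the unique root in (0,1) and λ3 the unique root greater than 1). -/
noncomputable section

open Filter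


def bt0 (x : ℚ) : ℚ := 41218*x^7 + 35648*x^6 - 932*x^5 - 13190*x^4 - 5128*x^3
  + 811*x^2 + 957*x + 174

def bt1 (x : ℚ) : ℚ := 3874492*x^12 - 14084302*x^11 + 12425954*x^10 + 8641603*x^9
  - 15230839*x^8 - 1369195*x^7 + 8618417*x^6 - 623249*x^5 - 2785973*x^4
  + 308165*x^3 + 495325*x^2 - 40670*x - 37632

def bt2 (x : ℚ) : ℚ := 2*(48802112*x^13 - 201803328*x^12 + 267014032*x^11 - 69927236*x^10
  - 95912858*x^9 + 37524471*x^8 + 30257812*x^7 - 9523224*x^6 - 8524312*x^5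
  + 2138687*x^4 + 1507490*x^3 - 398634*x^2 - 111012*x + 33408)

/-- The auxiliary difference equation (9), imposed for all integers `n ≥ 2`. -/
def Rec3 (y : ℕ → ℚ) : Prop := ∀ n : ℕ, 2 ≤ n →
  (n : ℚ)^3*((n : ℚ) + 1)^3 * bt0 ((n : ℚ) - 1) * y (n+1) - 2*(n : ℚ)*bt1 (n : ℚ) * y n
    - bt2 (n : ℚ) * y (n-1)
    + 2*(n : ℚ)*((n : ℚ) - 1)^4*(2*(n : ℚ) - 3) * bt0 (n : ℚ) * y (n-2) = 0

/-- The very-well-poised hypergeometric series `r̃_n`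
(the summation index `k ≥ 1` is written as `k + 1` with `k : ℕ`). -/
def rt (n : ℕ) : ℝ := -(Nat.factorial n : ℝ)^4 * ∑' k : ℕ,
  (((k : ℝ) + 1) + (n : ℝ)/2)
    * (∏ j ∈ Finset.range (n+1), (((k : ℝ) + 1) - (j : ℝ)))
    * (∏ j ∈ Finset.range (n+1), (((k : ℝ) + 1) + (n : ℝ) + (j : ℝ)))
    / (∏ j ∈ Finset.range (n+1), (((k : ℝ) + 1) + (j : ℝ))^6)

/-!
Consecutive ratios decide both growth rates. A solution of the recurrence whose initial values grow
by a factor of at least `100` keeps doing so. For ratios `q n ≥ 100` the recurrence reads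
`q (n + 2) = α n + β n / q (n + 1) + γ n / (q (n + 1) * q n)`, an asymptotically autonomous
contraction, so they converge to its fixed point `λ₃`.

All summands of the series are nonnegative, and up to a factor polynomial in `n` the series equals
its largest summand, at `k = K n`. Stationarity forces `K n / n` to converge to the saddle point
`x`. Because `K n` maximizes row `n`, the ratio of the maxima of rows `n + 1` and `n` lies between
the ratios of the rows at `K n` and at `K (n + 1)`. Both tend to the same explicit function of `x`,
which is a root of the characteristic polynomial in `(0, 1)`, hence equals `λ₁`.
-/

open scoped Topology

/-! ### Logarithmic growth rates -/

lemma tendsto_log_div_of_tendsto_ratio {y : ℕ → ℝ} {l : ℝ} (hl : l ≠ 0)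
    (h : Tendsto (fun n => y (n + 1) / y n) atTop (𝓝 l)) :
    Tendsto (fun n : ℕ => Real.log (y n) / n) atTop (𝓝 (Real.log l)) := by
  have increments : Tendsto (fun n => Real.log (y (n + 1)) - Real.log (y n)) atTop
      (𝓝 (Real.log l)) := by
    refine ((Real.continuousAt_log hl).tendsto.comp h).congr' ?_
    filter_upwards [h.eventually_ne hl] with n hn
    obtain ⟨hsucc, hself⟩ := div_ne_zero_iff.1 hn
    exact Real.log_div hsucc hself
  have initial : Tendsto (fun n : ℕ => Real.log (y 0) / n) atTop (𝓝 0) :=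
    tendsto_const_div_atTop_nhds_zero_nat _
  rw [← add_zero (Real.log l)]
  refine (increments.cesaro.add initial).congr fun n => ?_
  rw [Finset.sum_range_sub fun n => Real.log (y n)]
  ring

lemma tendsto_log_mul_pow_div {c : ℝ} (hc : c ≠ 0) (p : ℕ) :
    Tendsto (fun n : ℕ => Real.log (c * (n : ℝ) ^ p) / n) atTop (𝓝 0) := by
  have log_self : Tendsto (fun n : ℕ => Real.log n / n) atTop (𝓝 0) := by
    simpa [Function.comp_def] using
      (Real.tendsto_pow_log_div_mul_add_atTop 1 0 1 one_ne_zero).comp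
        tendsto_natCast_atTop_atTop
  have limit := (tendsto_const_div_atTop_nhds_zero_nat (Real.log c)).add
    (log_self.const_mul (p : ℝ))
  rw [mul_zero, add_zero] at limit
  refine limit.congr' ?_
  filter_upwards [eventually_ne_atTop 0] with n hn
  rw [Real.log_mul hc (pow_ne_zero p (Nat.cast_ne_zero.2 hn)), Real.log_pow]
  ring

lemma tendsto_log_div_of_polynomially_equivalent {M r : ℕ → ℝ} {L c C : ℝ} {p : ℕ} (hc : 0 < c)
    (hM : ∀ᶠ n in atTop, 0 < M n) (hlower : ∀ᶠ n : ℕ in atTop, M n ≤ c * (n : ℝ) ^ p * r n)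
    (hupper : ∀ᶠ n in atTop, r n ≤ C * M n)
    (h : Tendsto (fun n : ℕ => Real.log (M n) / n) atTop (𝓝 L)) :
    Tendsto (fun n : ℕ => Real.log (r n) / n) atTop (𝓝 L) := by
  have hr : ∀ᶠ n in atTop, 0 < r n := by
    filter_upwards [hM, hlower] with n hMn hn
    exact pos_of_mul_pos_right (hMn.trans_le hn) (by positivity)
  have hC : 0 < C := by
    obtain ⟨n, hMn, hrn, hn⟩ := (hM.and (hr.and hupper)).exists
    exact pos_of_mul_pos_left (hrn.trans_le hn) hMn.le
  have lower := h.sub (tendsto_log_mul_pow_div hc.ne' p)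
  have upper := h.add (tendsto_const_div_atTop_nhds_zero_nat (Real.log C))
  rw [sub_zero] at lower
  rw [add_zero] at upper
  refine tendsto_of_tendsto_of_tendsto_of_le_of_le' lower upper ?_ ?_
  · filter_upwards [hM, hr, hlower, eventually_gt_atTop 0] with n hMn hrn hn hn0
    have : (0 : ℝ) < n := Nat.cast_pos.2 hn0
    have hlog := Real.log_le_log hMn hn
    rw [Real.log_mul (by positivity) hrn.ne'] at hlog
    rw [← sub_div]
    gcongr
    linarith
  · filter_upwards [hM, hr, hupper] with n hMn hrn hn
    rw [← add_div, add_comm, ← Real.log_mul hC.ne' hMn.ne']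
    gcongr

lemma tendsto_succ_div_of_tendsto_div {a : ℕ → ℝ} {l : ℝ}
    (h : Tendsto (fun n : ℕ => a n / n) atTop (𝓝 l)) :
    Tendsto (fun n : ℕ => a (n + 1) / n) atTop (𝓝 l) := by
  have hsucc := ((tendsto_add_atTop_iff_nat 1).2 h).div (tendsto_natCast_div_add_atTop (1 : ℝ))
    one_ne_zero
  rw [div_one] at hsucc
  refine hsucc.congr' ?_
  filter_upwards [eventually_ne_atTop 0] with n hn
  rw [Pi.div_apply]
  push_cast
  field_simp

/-! ### Ratios of solutions of third-order recurrences -/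

lemma tendsto_zero_of_le_mul_add {u ε : ℕ → ℝ} {ρ : ℝ} (hρ₀ : 0 ≤ ρ) (hρ₁ : ρ < 1)
    (hu : ∀ n, 0 ≤ u n) (hε : Tendsto ε atTop (𝓝 0)) (h : ∀ n, u (n + 1) ≤ ρ * u n + ε n) :
    Tendsto u atTop (𝓝 0) := by
  refine tendsto_order.2 ⟨fun δ hδ => .of_forall fun n => hδ.trans_le (hu n), fun δ hδ => ?_⟩
  have : 0 < 1 - ρ := sub_pos.2 hρ₁
  obtain ⟨N, hN⟩ := eventually_atTop.1
    (hε.eventually_le_const (show 0 < δ / 2 * (1 - ρ) by positivity))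
  have geometric : ∀ k, u (k + N) ≤ δ / 2 + ρ ^ k * u N := by
    intro k
    induction k with
    | zero => simpa using (half_pos hδ).le
    | succ k ih =>
      rw [Nat.succ_add]
      calc u (k + N + 1) ≤ ρ * u (k + N) + ε (k + N) := h _
        _ ≤ ρ * (δ / 2 + ρ ^ k * u N) + δ / 2 * (1 - ρ) := by
          gcongr
          exact hN _ (Nat.le_add_left N k)
        _ = δ / 2 + ρ ^ (k + 1) * u N := by ring
  have decay : Tendsto (fun k => ρ ^ k * u N) atTop (𝓝 0) := by
    simpa using (tendsto_pow_atTop_nhds_zero_of_lt_one hρ₀ hρ₁).mul_const (u N)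
  rw [← map_add_atTop_eq_nat N, eventually_map]
  filter_upwards [decay.eventually_lt_const (half_pos hδ)] with k hk
  linarith [geometric k]

lemma tendsto_zero_of_le_mul_add_mul_add {u ε : ℕ → ℝ} {p r : ℝ} (hp : 0 ≤ p) (hr : 0 ≤ r)
    (hpr : p + r < 1) (hu : ∀ n, 0 ≤ u n) (hε : Tendsto ε atTop (𝓝 0))
    (h : ∀ n, u (n + 2) ≤ p * u (n + 1) + r * u n + ε n) : Tendsto u atTop (𝓝 0) := by
  -- `θ` makes `u (n + 1) + θ * u n` contract with factor `(1 + p + r) / 2`.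
  obtain ⟨θ, hθ⟩ : ∃ θ, θ = (1 - p + r) / 2 := ⟨_, rfl⟩
  have hθ₀ : 0 ≤ θ := by linarith
  have : p + θ = (1 + p + r) / 2 := by rw [hθ]; ring
  have hcontr : r ≤ (p + θ) * θ := by nlinarith
  have energy : Tendsto (fun n => u (n + 1) + θ * u n) atTop (𝓝 0) := by
    refine tendsto_zero_of_le_mul_add (ρ := p + θ) (by linarith) (by linarith)
      (fun n => add_nonneg (hu _) (mul_nonneg hθ₀ (hu n))) hε fun n => ?_
    calc u (n + 2) + θ * u (n + 1) ≤ (p + θ) * u (n + 1) + r * u n + ε n := by linarith [h n]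
      _ ≤ (p + θ) * u (n + 1) + (p + θ) * θ * u n + ε n := by gcongr; exact hu n
      _ = (p + θ) * (u (n + 1) + θ * u n) + ε n := by ring
  refine (tendsto_add_atTop_iff_nat 1).1 (squeeze_zero (fun n => hu _) (fun n => ?_) energy)
  exact le_add_of_nonneg_right (mul_nonneg hθ₀ (hu n))

section NormedField

variable {𝕜 : Type*} [NormedField 𝕜] {m : ℝ}

lemma norm_inv_sub_inv_le {x y : 𝕜} (hm : 0 < m) (hx : m ≤ ‖x‖) (hy : m ≤ ‖y‖) :
    ‖x⁻¹ - y⁻¹‖ ≤ ‖x - y‖ / m ^ 2 := by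
  rw [← dist_eq_norm, ← dist_eq_norm, dist_inv_inv₀ (norm_pos_iff.1 (hm.trans_le hx))
    (norm_pos_iff.1 (hm.trans_le hy)), sq]
  gcongr

lemma norm_inv_mul_inv_sub_le {x x' y : 𝕜} (hm : 0 < m) (hx : m ≤ ‖x‖) (hx' : m ≤ ‖x'‖)
    (hy : m ≤ ‖y‖) :
    ‖x⁻¹ * x'⁻¹ - y⁻¹ * y⁻¹‖ ≤ (‖x - y‖ + ‖x' - y‖) / m ^ 3 := by
  have norm_inv_le : ∀ {z : 𝕜}, m ≤ ‖z‖ → ‖z⁻¹‖ ≤ m⁻¹ := fun hz => by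
    rw [norm_inv]
    gcongr
  calc ‖x⁻¹ * x'⁻¹ - y⁻¹ * y⁻¹‖ = ‖(x⁻¹ - y⁻¹) * x'⁻¹ + y⁻¹ * (x'⁻¹ - y⁻¹)‖ := by ring_nf
    _ ≤ ‖x⁻¹ - y⁻¹‖ * ‖x'⁻¹‖ + ‖y⁻¹‖ * ‖x'⁻¹ - y⁻¹‖ := by
      grw [norm_add_le, norm_mul, norm_mul]
    _ ≤ ‖x - y‖ / m ^ 2 * m⁻¹ + m⁻¹ * (‖x' - y‖ / m ^ 2) := by
      gcongr
      exacts [norm_inv_sub_inv_le hm hx hy, norm_inv_le hx', norm_inv_le hy,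
        norm_inv_sub_inv_le hm hx' hy]
    _ = (‖x - y‖ + ‖x' - y‖) / m ^ 3 := by
      field_simp

variable {α β γ : ℕ → 𝕜} {a b c l : 𝕜}

theorem tendsto_of_eq_add_mul_inv {q : ℕ → 𝕜} (hm : 0 < m) (hq : ∀ n, m ≤ ‖q n‖)
    (hl : m ≤ ‖l‖) (hfix : l = a + b * l⁻¹ + c * (l⁻¹ * l⁻¹))
    (hcontr : ‖b‖ / m ^ 2 + 2 * ‖c‖ / m ^ 3 < 1)
    (hrec : ∀ n, q (n + 2) = α n + β n * (q (n + 1))⁻¹ + γ n * ((q (n + 1))⁻¹ * (q n)⁻¹))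
    (hα : Tendsto α atTop (𝓝 a)) (hβ : Tendsto β atTop (𝓝 b)) (hγ : Tendsto γ atTop (𝓝 c)) :
    Tendsto q atTop (𝓝 l) := by
  set ε : ℕ → ℝ := fun n => ‖α n - a‖ + ‖β n - b‖ * m⁻¹ + ‖γ n - c‖ * (m⁻¹ * m⁻¹)
  have hε₀ : Tendsto ε atTop (𝓝 0) := by
    simpa using ((tendsto_iff_norm_sub_tendsto_zero.1 hα).add
      ((tendsto_iff_norm_sub_tendsto_zero.1 hβ).mul_const m⁻¹)).add
      ((tendsto_iff_norm_sub_tendsto_zero.1 hγ).mul_const (m⁻¹ * m⁻¹))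
  refine tendsto_iff_norm_sub_tendsto_zero.2 <| tendsto_zero_of_le_mul_add_mul_add
    (p := ‖b‖ / m ^ 2 + ‖c‖ / m ^ 3) (r := ‖c‖ / m ^ 3) (by positivity) (by positivity)
    (by linear_combination hcontr) (fun n => norm_nonneg _) hε₀ fun n => ?_
  have norm_inv_le (n : ℕ) : ‖(q n)⁻¹‖ ≤ m⁻¹ := by
    rw [norm_inv]
    exact inv_anti₀ hm (hq n)
  obtain ⟨u, hu⟩ : ∃ u, (q (n + 1))⁻¹ = u := ⟨_, rfl⟩
  obtain ⟨v, hv⟩ : ∃ v, (q n)⁻¹ = v := ⟨_, rfl⟩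
  have hsplit : q (n + 2) - l = (α n - a) + (β n - b) * u + (γ n - c) * (u * v)
      + b * (u - l⁻¹) + c * (u * v - l⁻¹ * l⁻¹) := by
    rw [← hu, ← hv]
    linear_combination hrec n - hfix
  calc ‖q (n + 2) - l‖
    _ ≤ ‖α n - a‖ + ‖β n - b‖ * ‖u‖ + ‖γ n - c‖ * (‖u‖ * ‖v‖)
        + ‖b‖ * ‖u - l⁻¹‖ + ‖c‖ * ‖u * v - l⁻¹ * l⁻¹‖ := by
      rw [hsplit]
      grw [norm_add_le, norm_add_le, norm_add_le, norm_add_le]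
      simp only [norm_mul, le_refl]
    _ ≤ ‖α n - a‖ + ‖β n - b‖ * m⁻¹ + ‖γ n - c‖ * (m⁻¹ * m⁻¹)
        + ‖b‖ * (‖q (n + 1) - l‖ / m ^ 2)
        + ‖c‖ * ((‖q (n + 1) - l‖ + ‖q n - l‖) / m ^ 3) := by
      subst hu hv
      gcongr
      exacts [norm_inv_le _, norm_inv_le _, norm_inv_le _, norm_inv_sub_inv_le hm (hq _) hl,
        norm_inv_mul_inv_sub_le hm (hq _) (hq _) hl]
    _ = _ := by ring

theorem tendsto_ratio_of_recurrence {y : ℕ → 𝕜} (hm : 0 < m) (hy : ∀ n, y n ≠ 0)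
    (hgrowth : ∀ n, m * ‖y n‖ ≤ ‖y (n + 1)‖) (hl : m ≤ ‖l‖) (hroot : l ^ 3 = a * l ^ 2 + b * l + c)
    (hcontr : ‖b‖ / m ^ 2 + 2 * ‖c‖ / m ^ 3 < 1)
    (hrec : ∀ n, y (n + 3) = α n * y (n + 2) + β n * y (n + 1) + γ n * y n)
    (hα : Tendsto α atTop (𝓝 a)) (hβ : Tendsto β atTop (𝓝 b)) (hγ : Tendsto γ atTop (𝓝 c)) :
    Tendsto (fun n => y (n + 1) / y n) atTop (𝓝 l) := by
  have hl₀ : l ≠ 0 := norm_pos_iff.1 (hm.trans_le hl)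
  refine tendsto_of_eq_add_mul_inv hm (fun n => ?_) hl ?_ hcontr (fun n => ?_) hα hβ hγ
  · rw [norm_div, le_div_iff₀ (norm_pos_iff.2 (hy n))]
    exact hgrowth n
  · field_simp
    linear_combination hroot
  · have := hy n
    have := hy (n + 1)
    have := hy (n + 2)
    field_simp
    linear_combination hrec n

end NormedField

lemma pos_and_mul_le_succ_of_recurrence {K : Type*} [Field K] [LinearOrder K]
    [IsStrictOrderedRing K] {y d a b c : ℕ → K} {m : K} (hm : 1 ≤ m) (hd : ∀ n, 0 < d n)
    (hda : ∀ n, m * d n ≤ a n) (hc : ∀ n, 0 ≤ c n) (hcb : ∀ n, c n ≤ b n)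
    (hrec : ∀ n, d n * y (n + 3) = a n * y (n + 2) + b n * y (n + 1) - c n * y n)
    (h₁ : 0 < y 1) (h₀₁ : y 0 ≤ y 1) (h₁₂ : m * y 1 ≤ y 2) (n : ℕ) :
    0 < y (n + 1) ∧ m * y (n + 1) ≤ y (n + 2) := by
  suffices h : y n ≤ y (n + 1) ∧ 0 < y (n + 1) ∧ m * y (n + 1) ≤ y (n + 2) from h.2
  induction n with
  | zero => exact ⟨h₀₁, h₁, h₁₂⟩
  | succ n ih =>
    obtain ⟨hmono, hpos, hgrow⟩ := ih
    have hmono' : y (n + 1) ≤ y (n + 2) := (le_mul_of_one_le_left hpos.le hm).trans hgrow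
    have hpos' : 0 < y (n + 2) := hpos.trans_le hmono'
    have htail : c n * y n ≤ b n * y (n + 1) :=
      (mul_le_mul_of_nonneg_left hmono (hc n)).trans (mul_le_mul_of_nonneg_right (hcb n) hpos.le)
    refine ⟨hmono', hpos', le_of_mul_le_mul_left ?_ (hd n)⟩
    calc d n * (m * y (n + 2)) = m * d n * y (n + 2) := by ring
      _ ≤ a n * y (n + 2) := by gcongr; exact hda n
      _ ≤ a n * y (n + 2) + b n * y (n + 1) - c n * y n := by linarith
      _ = d n * y (n + 3) := (hrec n).symm

/-! ### Growth of the rational solutions -/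

lemma tendsto_div_pow_atTop {K : Type*} [Field K] [LinearOrder K] [IsStrictOrderedRing K]
    [TopologicalSpace K] [OrderTopology K] {f g : K → K} {k : ℕ} {l : K} (hg : ContinuousAt g 0)
    (hl : g 0 = l) (h : ∀ x ≠ 0, f x = x ^ k * g x⁻¹) :
    Tendsto (fun x => f x / x ^ k) atTop (𝓝 l) := by
  rw [← hl]
  refine (hg.tendsto.comp tendsto_inv_atTop_zero).congr' ?_
  filter_upwards [eventually_ne_atTop 0] with x hx
  rw [Function.comp_apply, h x hx, mul_div_cancel_left₀ _ (pow_ne_zero k hx)]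

/-- The common characteristic polynomial of the difference equations. -/
def charCubic (l : ℝ) : ℝ := l ^ 3 - 188 * l ^ 2 - 2368 * l + 4

lemma tendsto_bt0_div_pow : Tendsto (fun x => bt0 x / x ^ 7) atTop (𝓝 41218) := by
  refine tendsto_div_pow_atTop (f := bt0) (k := 7) (g := fun t => 41218 + 35648 * t
    - 932 * t ^ 2 - 13190 * t ^ 3 - 5128 * t ^ 4 + 811 * t ^ 5 + 957 * t ^ 6 + 174 * t ^ 7)
    (by fun_prop) (by norm_num) fun x hx => ?_
  unfold bt0
  field_simp

lemma tendsto_bt1_div_pow : Tendsto (fun x => bt1 x / x ^ 12) atTop (𝓝 3874492) := by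
  refine tendsto_div_pow_atTop (f := bt1) (k := 12) (g := fun t => 3874492 - 14084302 * t
    + 12425954 * t ^ 2 + 8641603 * t ^ 3 - 15230839 * t ^ 4 - 1369195 * t ^ 5 + 8618417 * t ^ 6
    - 623249 * t ^ 7 - 2785973 * t ^ 8 + 308165 * t ^ 9 + 495325 * t ^ 10 - 40670 * t ^ 11
    - 37632 * t ^ 12) (by fun_prop) (by norm_num) fun x hx => ?_
  unfold bt1
  field_simp

lemma tendsto_bt2_div_pow : Tendsto (fun x => bt2 x / x ^ 13) atTop (𝓝 (2368 * 41218)) := by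
  refine tendsto_div_pow_atTop (f := bt2) (k := 13) (g := fun t => 2 * (48802112
    - 201803328 * t + 267014032 * t ^ 2 - 69927236 * t ^ 3 - 95912858 * t ^ 4 + 37524471 * t ^ 5
    + 30257812 * t ^ 6 - 9523224 * t ^ 7 - 8524312 * t ^ 8 + 2138687 * t ^ 9 + 1507490 * t ^ 10
    - 398634 * t ^ 11 - 111012 * t ^ 12 + 33408 * t ^ 13)) (by fun_prop) (by norm_num)
    fun x hx => ?_
  unfold bt2
  field_simp

namespace Rec3

/-- The coefficient of `y (n + 1)` in the recurrence `Rec3`, as a function of `n`. -/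
def leadCoeff (x : ℚ) : ℚ := x ^ 3 * (x + 1) ^ 3 * bt0 (x - 1)

/-- The coefficient of `y n` in the recurrence `Rec3`, up to sign, as a function of `n`. The
coefficient of `y (n - 1)` is `bt2`, again up to sign. -/
def coeffSelf (x : ℚ) : ℚ := 2 * x * bt1 x

/-- The coefficient of `y (n - 2)` in the recurrence `Rec3`, as a function of `n`. -/
def coeffLast (x : ℚ) : ℚ := 2 * x * (x - 1) ^ 4 * (2 * x - 3) * bt0 x

lemma leadCoeff_pos {x : ℚ} (hx : 2 ≤ x) : 0 < leadCoeff x := by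
  obtain ⟨t, ht, rfl⟩ := exists_nonneg_add_of_le hx
  unfold leadCoeff bt0
  ring_nf
  positivity

lemma mul_leadCoeff_le_coeffSelf {x : ℚ} (hx : 2 ≤ x) : 100 * leadCoeff x ≤ coeffSelf x := by
  obtain ⟨t, ht, rfl⟩ := exists_nonneg_add_of_le hx
  rw [← sub_nonneg]
  unfold coeffSelf leadCoeff bt1 bt0
  ring_nf
  positivity

lemma coeffLast_nonneg {x : ℚ} (hx : 2 ≤ x) : 0 ≤ coeffLast x := by
  obtain ⟨t, ht, rfl⟩ := exists_nonneg_add_of_le hx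
  unfold coeffLast bt0
  ring_nf
  positivity

lemma coeffLast_le_bt2 {x : ℚ} (hx : 2 ≤ x) : coeffLast x ≤ bt2 x := by
  obtain ⟨t, ht, rfl⟩ := exists_nonneg_add_of_le hx
  rw [← sub_nonneg]
  unfold coeffLast bt2 bt0
  ring_nf
  positivity

lemma tendsto_leadCoeff_div_pow : Tendsto (fun x => leadCoeff x / x ^ 13) atTop (𝓝 41218) := by
  have shifted : Tendsto (fun x : ℚ => bt0 (x - 1) / (x - 1) ^ 7) atTop (𝓝 41218) :=
    tendsto_bt0_div_pow.comp (by
      simpa [sub_eq_add_neg] using tendsto_atTop_add_const_right atTop (-1 : ℚ) tendsto_id)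
  have factor : Tendsto (fun x : ℚ => x ^ 3 * (x + 1) ^ 3 * (x - 1) ^ 7 / x ^ 13) atTop (𝓝 1) := by
    refine tendsto_div_pow_atTop (g := fun t => (1 + t) ^ 3 * (1 - t) ^ 7) (by fun_prop)
      (by norm_num) fun x hx => ?_
    field_simp
  rw [← one_mul (41218 : ℚ)]
  refine (factor.mul shifted).congr' ?_
  filter_upwards [eventually_gt_atTop 1] with x hx
  have := sub_pos.2 hx
  unfold leadCoeff
  field_simp

lemma tendsto_coeffSelf_div_pow :
    Tendsto (fun x => coeffSelf x / x ^ 13) atTop (𝓝 (188 * 41218)) := by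
  rw [show (188 * 41218 : ℚ) = 2 * 3874492 by norm_num]
  refine (tendsto_bt1_div_pow.const_mul 2).congr' ?_
  filter_upwards [eventually_gt_atTop 0] with x hx
  unfold coeffSelf
  field_simp

lemma tendsto_coeffLast_div_pow :
    Tendsto (fun x => coeffLast x / x ^ 13) atTop (𝓝 (4 * 41218)) := by
  have factor : Tendsto (fun x : ℚ => 2 * x * (x - 1) ^ 4 * (2 * x - 3) / x ^ 6) atTop (𝓝 4) := by
    refine tendsto_div_pow_atTop (g := fun t => 2 * (1 - t) ^ 4 * (2 - 3 * t)) (by fun_prop)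
      (by norm_num) fun x hx => ?_
    field_simp
  refine (factor.mul tendsto_bt0_div_pow).congr' ?_
  filter_upwards [eventually_gt_atTop 0] with x hx
  unfold coeffLast
  field_simp

lemma tendsto_div_leadCoeff {f : ℚ → ℚ} {c : ℚ}
    (hf : Tendsto (fun x => f x / x ^ 13) atTop (𝓝 (c * 41218))) :
    Tendsto (fun n : ℕ => ((f (n + 3) / leadCoeff (n + 3) : ℚ) : ℝ)) atTop (𝓝 c) := by
  have quotient : Tendsto (fun x => f x / leadCoeff x) atTop (𝓝 c) := by
    have h := hf.div tendsto_leadCoeff_div_pow (by norm_num)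
    rw [mul_div_cancel_right₀ c (by norm_num)] at h
    refine h.congr' ?_
    filter_upwards [eventually_ne_atTop 0] with x hx
    exact div_div_div_cancel_right₀ (pow_ne_zero 13 hx) _ _
  exact (Rat.continuous_coe_real.tendsto c).comp <| quotient.comp <|
    tendsto_atTop_add_const_right _ 3 tendsto_natCast_atTop_atTop

variable {y : ℕ → ℚ} (hy : Rec3 y)
include hy

lemma leadCoeff_mul_eq (n : ℕ) :
    leadCoeff (n + 2) * y (n + 3) =
      coeffSelf (n + 2) * y (n + 2) + bt2 (n + 2) * y (n + 1) - coeffLast (n + 2) * y n := by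
  have h := hy (n + 2) (Nat.le_add_left 2 n)
  rw [Nat.add_sub_cancel, show n + 2 - 1 = n + 1 by rfl] at h
  push_cast at h
  unfold leadCoeff coeffSelf coeffLast
  linear_combination h

lemma pos_and_mul_le_succ (h₁ : 0 < y 1) (h₀₁ : y 0 ≤ y 1) (h₁₂ : 100 * y 1 ≤ y 2) (n : ℕ) :
    0 < y (n + 1) ∧ 100 * y (n + 1) ≤ y (n + 2) := by
  have two_le (n : ℕ) : (2 : ℚ) ≤ n + 2 := le_add_of_nonneg_left n.cast_nonneg
  exact pos_and_mul_le_succ_of_recurrence (by norm_num) (fun n => leadCoeff_pos (two_le n))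
    (fun n => mul_leadCoeff_le_coeffSelf (two_le n)) (fun n => coeffLast_nonneg (two_le n))
    (fun n => coeffLast_le_bt2 (two_le n)) hy.leadCoeff_mul_eq h₁ h₀₁ h₁₂ n

lemma succ_eq_div_leadCoeff (n : ℕ) :
    y (n + 4) = coeffSelf (n + 3) / leadCoeff (n + 3) * y (n + 3)
      + bt2 (n + 3) / leadCoeff (n + 3) * y (n + 2)
      + -(coeffLast (n + 3) / leadCoeff (n + 3)) * y (n + 1) := by
  have hlead : 0 < leadCoeff (n + 3) := leadCoeff_pos (by linarith [n.cast_nonneg (α := ℚ)])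
  have h := hy.leadCoeff_mul_eq (n + 1)
  push_cast [add_assoc] at h
  norm_num at h
  field_simp
  linear_combination h

theorem tendsto_log_abs_div {l : ℝ} (hroot : charCubic l = 0) (hl : 1 < l)
    (h₁ : 0 < y 1) (h₀₁ : y 0 ≤ y 1) (h₁₂ : 100 * y 1 ≤ y 2) :
    Tendsto (fun n : ℕ => Real.log |(y n : ℝ)| / n) atTop (𝓝 (Real.log l)) := by
  unfold charCubic at hroot
  have hgrowth := hy.pos_and_mul_le_succ h₁ h₀₁ h₁₂
  have hl' : 100 ≤ l := by
    by_contra! hlt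
    nlinarith [mul_pos (sub_pos.2 hl) (sub_pos.2 hlt)]
  have hratio : Tendsto (fun n : ℕ => (y (n + 1 + 1) : ℝ) / y (n + 1)) atTop (𝓝 l) := by
    refine tendsto_ratio_of_recurrence (m := 100) (y := fun n => (y (n + 1) : ℝ)) (by norm_num)
      (fun n => Rat.cast_ne_zero.2 (hgrowth n).1.ne') (fun n => ?_)
      (hl'.trans (Real.le_norm_self l)) ?_ (by norm_num)
      (fun n => mod_cast hy.succ_eq_div_leadCoeff n)
      (tendsto_div_leadCoeff tendsto_coeffSelf_div_pow)
      (tendsto_div_leadCoeff tendsto_bt2_div_pow)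
      (tendsto_div_leadCoeff tendsto_coeffLast_div_pow).neg
    · obtain ⟨hpos, hgrow⟩ := hgrowth n
      rw [Real.norm_of_nonneg (mod_cast hpos.le)]
      exact le_trans (mod_cast hgrow) (Real.le_norm_self _)
    · push_cast
      linear_combination hroot
  simp only [Real.log_abs]
  exact tendsto_log_div_of_tendsto_ratio (by positivity) ((tendsto_add_atTop_iff_nat 1).1 hratio)

end Rec3

/-! ### Peaks of nonnegative arrays -/

lemma tendsto_of_eventually_mem_isClosed {ι X T : Type*} [TopologicalSpace X] [TopologicalSpace T]
    {f : Filter ι} {x : ι → X} {t : ι → T} {s : Set X} {A : Set (X × T)} {x₀ : X} {t₀ : T}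
    (hs : IsCompact s) (hA : IsClosed A) (hx : ∀ᶠ i in f, x i ∈ s) (ht : Tendsto t f (𝓝 t₀))
    (hmem : ∀ᶠ i in f, (x i, t i) ∈ A) (hunique : ∀ z ∈ s, (z, t₀) ∈ A → z = x₀) :
    Tendsto x f (𝓝 x₀) := by
  refine hs.tendsto_nhds_of_unique_mapClusterPt hx fun z hz hcluster => hunique z hz ?_
  obtain ⟨U, hU, hxU⟩ := mapClusterPt_iff_ultrafilter.1 hcluster
  exact hA.mem_of_tendsto (hxU.prodMk_nhds (ht.mono_left hU)) (hmem.filter_mono hU)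

lemma tendsto_ratio_of_isMax {κ : Type*} {b : ℕ → κ → ℝ} {K : ℕ → κ} {r s : ℕ → ℝ} {l : ℝ}
    (hb : ∀ n j, 0 ≤ b n j) (hpos : ∀ᶠ n in atTop, 0 < b n (K n))
    (hmax : ∀ᶠ n in atTop, ∀ j, b n j ≤ b n (K n))
    (hr : ∀ᶠ n in atTop, b (n + 1) (K n) = b n (K n) * r n)
    (hs : ∀ᶠ n in atTop, b (n + 1) (K (n + 1)) = b n (K (n + 1)) * s n)
    (hrl : Tendsto r atTop (𝓝 l)) (hsl : Tendsto s atTop (𝓝 l)) :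
    Tendsto (fun n => b (n + 1) (K (n + 1)) / b n (K n)) atTop (𝓝 l) := by
  have hpos' := (tendsto_add_atTop_nat 1).eventually hpos
  have hmax' := (tendsto_add_atTop_nat 1).eventually hmax
  refine tendsto_of_tendsto_of_tendsto_of_le_of_le' hrl hsl ?_ ?_
  · filter_upwards [hpos, hmax', hr] with n hn hn' hrn
    rw [le_div_iff₀' hn, ← hrn]
    exact hn' _
  · filter_upwards [hpos, hpos', hmax, hs] with n hn hn' hmaxn hsn
    have hsn₀ : 0 < s n := pos_of_mul_pos_right (hsn ▸ hn') (hb _ _)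
    rw [div_le_iff₀' hn, hsn]
    gcongr
    exact hmaxn _

section InverseSquares

variable {f : ℕ → ℝ} {M : ℝ} (hf : ∀ k, 0 ≤ f k) (hM : ∀ k, f k ≤ M)
include hf hM

lemma summable_div_sq : Summable fun k : ℕ => f k / (k : ℝ) ^ 2 := by
  refine .of_nonneg_of_le (fun k => div_nonneg (hf k) (sq_nonneg _)) (fun k => ?_)
    (hasSum_zeta_two.summable.mul_left M)
  rw [mul_one_div]
  gcongr
  exact hM k

lemma div_sq_le_tsum_div_sq (K : ℕ) : f K / (K : ℝ) ^ 2 ≤ ∑' k : ℕ, f k / (k : ℝ) ^ 2 :=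
  (summable_div_sq hf hM).le_tsum K fun k _ => div_nonneg (hf k) (sq_nonneg _)

lemma tsum_div_sq_le : ∑' k : ℕ, f k / (k : ℝ) ^ 2 ≤ Real.pi ^ 2 / 6 * M := by
  rw [mul_comm, ← hasSum_zeta_two.tsum_eq, ← tsum_mul_left]
  refine (summable_div_sq hf hM).tsum_le_tsum (fun k => ?_) (hasSum_zeta_two.summable.mul_left M)
  rw [mul_one_div]
  gcongr
  exact hM k

end InverseSquares

/-! ### The summands of the series -/

open scoped Nat

/-- The summand of `-rt n` at `k`, multiplied by `k ^ 2` to allow a comparison of the series with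
`∑ 1 / k ^ 2`. At `k = 0` the value is the junk `0 / 0 = 0`. -/
def weight (n k : ℕ) : ℝ :=
  (n ! : ℝ) ^ 4 * (k : ℝ) ^ 2 * (k + n / 2) * k.descFactorial (n + 1) *
    (k + n).ascFactorial (n + 1) / (k.ascFactorial (n + 1) : ℝ) ^ 6

lemma cast_descFactorial_eq_prod (n k : ℕ) :
    (n.descFactorial k : ℝ) = ∏ j ∈ Finset.range k, ((n : ℝ) - j) := by
  rw [← descPochhammer_eval_eq_descFactorial, descPochhammer_eval_eq_prod_range]

lemma cast_ascFactorial_eq_prod (n k : ℕ) :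
    (n.ascFactorial k : ℝ) = ∏ j ∈ Finset.range k, ((n : ℝ) + j) := by
  rw [Nat.ascFactorial_eq_prod_range]
  push_cast
  rfl

lemma ascFactorial_pos {a : ℕ} (ha : 0 < a) (m : ℕ) : 0 < a.ascFactorial m := by
  obtain ⟨a, rfl⟩ := Nat.exists_add_one_eq.2 ha
  exact Nat.ascFactorial_pos a m

lemma cast_succ_ascFactorial {a : ℕ} (ha : 0 < a) (m : ℕ) :
    ((a + 1).ascFactorial m : ℝ) = (a + m) / a * a.ascFactorial m := by
  have ha' : (a : ℝ) ≠ 0 := Nat.cast_ne_zero.2 ha.ne'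
  rw [div_mul_eq_mul_div, eq_div_iff ha', mul_comm]
  exact mod_cast Nat.succ_ascFactorial a m

lemma rt_eq_neg_tsum_weight (n : ℕ) : rt n = -∑' k : ℕ, weight n k / (k : ℝ) ^ 2 := by
  have support : Function.support (fun k : ℕ => weight n k / (k : ℝ) ^ 2) ⊆ Set.range Nat.succ := by
    intro k hk
    rcases k with _ | k
    · simp at hk
    · exact ⟨k, rfl⟩
  rw [← Nat.succ_injective.tsum_eq support, rt, neg_mul, ← tsum_mul_left]
  refine congrArg Neg.neg (tsum_congr fun k => ?_)
  have hk : ((k : ℝ) + 1) ≠ 0 := k.cast_add_one_ne_zero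
  simp only [weight, cast_descFactorial_eq_prod, cast_ascFactorial_eq_prod, Finset.prod_pow,
    Nat.succ_eq_add_one, Nat.cast_add, Nat.cast_one]
  field_simp

lemma weight_nonneg (n k : ℕ) : 0 ≤ weight n k := by
  unfold weight
  positivity

lemma weight_pos {n k : ℕ} (h : n < k) : 0 < weight n k := by
  have hk : 0 < k := n.zero_le.trans_lt h
  have hdesc : 0 < k.descFactorial (n + 1) := Nat.descFactorial_pos.2 h
  have hasc : 0 < k.ascFactorial (n + 1) := ascFactorial_pos hk _
  have hasc' : 0 < (k + n).ascFactorial (n + 1) := ascFactorial_pos (Nat.add_pos_left hk n) _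
  unfold weight
  positivity

lemma weight_eq_zero {n k : ℕ} (h : k ≤ n) : weight n k = 0 := by
  rw [weight, Nat.descFactorial_of_lt (Nat.lt_add_one_of_le h)]
  simp

/-- The numerator of `weight n (k + 1) / weight n k` at `x = k`, `y = n`, made homogeneous by
means of `t = 1`. -/
def stepNum (x y t : ℝ) : ℝ := (x + t) ^ 3 * (x + t + y / 2) * (x + 2 * y + t) * x ^ 4

/-- The denominator of `weight n (k + 1) / weight n k` at `x = k`, `y = n`, made homogeneous by
means of `t = 1`. -/
def stepDen (x y t : ℝ) : ℝ := (x - y) * (x + y / 2) * (x + y) * (x + y + t) ^ 6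

/-- The ratio `weight (n + 1) k / weight n k` at `x = k`, `y = n`, made homogeneous by means of
`t = 1`. -/
def indexRatio (x y t : ℝ) : ℝ :=
  (y + t) ^ 4 * (x + (y + t) / 2) * (x - y - t) * (x + 2 * y + t) * (x + 2 * y + 2 * t) /
    ((x + y / 2) * (x + y) * (x + y + t) ^ 6)

lemma weight_succ_right_mul {n k : ℕ} (hk : 0 < k) (h : n ≤ k) :
    weight n (k + 1) * stepDen k n 1 = weight n k * stepNum k n 1 := by
  have : (0 : ℝ) < k := Nat.cast_pos.2 hk
  have desc :
      ((k : ℝ) - n) * (k + 1).descFactorial (n + 1) = (k + 1) * k.descFactorial (n + 1) := by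
    rw [← Nat.cast_sub h]
    exact mod_cast Nat.add_sub_add_right k 1 n ▸ Nat.succ_descFactorial k (n + 1)
  have hA : (0 : ℝ) < k.ascFactorial (n + 1) := Nat.cast_pos.2 (ascFactorial_pos hk _)
  unfold weight stepNum stepDen
  rw [Nat.add_right_comm, cast_succ_ascFactorial hk, cast_succ_ascFactorial (Nat.add_pos_left hk n)]
  push_cast
  field_simp
  linear_combination ((k : ℝ) + 2 * n + 1) * (k + n).ascFactorial (n + 1) * (k + n + 1) ^ 6 * desc

lemma weight_succ_left {n k : ℕ} (h : n < k) :
    weight (n + 1) k = weight n k * indexRatio k n 1 := by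
  have hk : 0 < k := n.zero_le.trans_lt h
  have hA : (0 : ℝ) < k.ascFactorial (n + 1) := Nat.cast_pos.2 (ascFactorial_pos hk _)
  have desc : (k.descFactorial (n + 2) : ℝ) = (k - n - 1) * k.descFactorial (n + 1) := by
    rw [Nat.descFactorial_succ, Nat.cast_mul, Nat.cast_sub h]
    push_cast
    ring
  unfold weight indexRatio
  rw [desc, ← add_assoc k n 1, Nat.ascFactorial_succ (n := k), Nat.ascFactorial_succ,
    Nat.cast_mul _ ((k + n + 1).ascFactorial (n + 1)),
    cast_succ_ascFactorial (Nat.add_pos_left hk n), Nat.factorial_succ]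
  push_cast
  field_simp
  ring

lemma stepNum_mul (c x y t : ℝ) : stepNum (c * x) (c * y) (c * t) = c ^ 9 * stepNum x y t := by
  unfold stepNum
  ring

lemma stepDen_mul (c x y t : ℝ) : stepDen (c * x) (c * y) (c * t) = c ^ 9 * stepDen x y t := by
  unfold stepDen
  ring

lemma indexRatio_mul {c : ℝ} (hc : c ≠ 0) (x y t : ℝ) :
    indexRatio (c * x) (c * y) (c * t) = indexRatio x y t := by
  unfold indexRatio
  rw [← mul_div_mul_left _ ((x + y / 2) * (x + y) * (x + y + t) ^ 6) (pow_ne_zero 8 hc)]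
  ring

lemma stepNum_le_stepDen {x y t : ℝ} (ht : 0 ≤ t) (hty : t ≤ y) (hxy : 2 * y ≤ x) :
    stepNum x y t ≤ stepDen x y t := by
  obtain ⟨p, hp, rfl⟩ := exists_nonneg_add_of_le hty
  obtain ⟨q, hq, rfl⟩ := exists_nonneg_add_of_le hxy
  rw [← sub_nonneg]
  unfold stepNum stepDen
  ring_nf
  positivity

/-- `k` is a peak of row `n` if it lies in `(n, 2 * n]` and `weight n` is maximal at `k` among all
natural numbers. -/
def IsPeak (n k : ℕ) : Prop := n < k ∧ k ≤ 2 * n ∧ ∀ j, weight n j ≤ weight n k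

lemma weight_succ_right_le {n k : ℕ} (hn : 0 < n) (h : 2 * n ≤ k) :
    weight n (k + 1) ≤ weight n k := by
  have hn' : (1 : ℝ) ≤ n := Nat.one_le_cast.2 hn
  have h' : 2 * (n : ℝ) ≤ k := mod_cast h
  have hden : 0 < stepDen k n 1 := by
    have : 0 < (k : ℝ) - n := by linarith
    unfold stepDen
    positivity
  refine le_of_mul_le_mul_right ?_ hden
  rw [weight_succ_right_mul (by lia) (by lia)]
  exact mul_le_mul_of_nonneg_left (stepNum_le_stepDen zero_le_one hn' h') (weight_nonneg n k)

lemma exists_isPeak (n : ℕ) (hn : 0 < n) : ∃ k, IsPeak n k := by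
  obtain ⟨K, hK, hmax⟩ := (Finset.Ioc n (2 * n)).exists_max_image (weight n)
    ⟨2 * n, Finset.mem_Ioc.2 ⟨by lia, le_rfl⟩⟩
  obtain ⟨hnK, hKn⟩ := Finset.mem_Ioc.1 hK
  refine ⟨K, hnK, hKn, fun j => ?_⟩
  obtain hj | hj := le_or_gt j n
  · exact (weight_eq_zero hj).trans_le (weight_nonneg n K)
  obtain hj' | hj' := le_total j (2 * n)
  · exact hmax j (Finset.mem_Ioc.2 ⟨hj, hj'⟩)
  · have antitone : AntitoneOn (weight n) (Set.Ici (2 * n)) :=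
      antitoneOn_nat_Ici_of_succ_le fun k hk => weight_succ_right_le hn hk
    exact (antitone Set.self_mem_Ici hj' hj').trans
      (hmax _ (Finset.mem_Ioc.2 ⟨by lia, le_rfl⟩))

namespace IsPeak

variable {n k : ℕ} (hk : IsPeak n k)
include hk

lemma stepNum_le_stepDen : stepNum k n 1 ≤ stepDen k n 1 := by
  refine le_of_mul_le_mul_left ?_ (weight_pos hk.1)
  rw [← weight_succ_right_mul (n.zero_le.trans_lt hk.1) hk.1.le]
  have : (0 : ℝ) ≤ k - n := sub_nonneg.2 (mod_cast hk.1.le)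
  refine mul_le_mul_of_nonneg_right (hk.2.2 _) ?_
  unfold stepDen
  positivity

lemma stepDen_sub_one_le_stepNum (hn : 0 < n) : stepDen (k - 1) n 1 ≤ stepNum (k - 1) n 1 := by
  obtain ⟨j, rfl⟩ := Nat.exists_add_one_eq.2 (n.zero_le.trans_lt hk.1)
  have hnj : n ≤ j := Nat.le_of_lt_succ hk.1
  have hnum : 0 ≤ stepNum j n 1 := by
    unfold stepNum
    positivity
  push_cast
  rw [add_sub_cancel_right]
  refine le_of_mul_le_mul_left ?_ (weight_pos hk.1)
  rw [weight_succ_right_mul (hn.trans_le hnj) hnj]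
  exact mul_le_mul_of_nonneg_right (hk.2.2 _) hnum

lemma div_mem_Icc (hn : 0 < n) : (k : ℝ) / n ∈ Set.Icc 1 2 := by
  have hn' : (0 : ℝ) < n := Nat.cast_pos.2 hn
  rw [Set.mem_Icc, one_le_div hn', div_le_iff₀ hn']
  exact ⟨mod_cast hk.1.le, mod_cast hk.2.1⟩

lemma scaled_stepNum_le_stepDen (hn : 0 < n) :
    stepNum (k / n) 1 (1 / n) ≤ stepDen (k / n) 1 (1 / n) := by
  have hn' : (0 : ℝ) < n := Nat.cast_pos.2 hn
  refine le_of_mul_le_mul_left ?_ (pow_pos hn' 9)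
  rw [← stepNum_mul, ← stepDen_mul]
  simpa only [mul_div_cancel₀ _ hn'.ne', mul_one] using hk.stepNum_le_stepDen

lemma scaled_stepDen_sub_le_stepNum (hn : 0 < n) :
    stepDen (k / n - 1 / n) 1 (1 / n) ≤ stepNum (k / n - 1 / n) 1 (1 / n) := by
  have hn' : (0 : ℝ) < n := Nat.cast_pos.2 hn
  refine le_of_mul_le_mul_left ?_ (pow_pos hn' 9)
  rw [← stepNum_mul, ← stepDen_mul]
  simpa only [mul_sub, mul_div_cancel₀ _ hn'.ne', mul_one] using hk.stepDen_sub_one_le_stepNum hn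

end IsPeak

/-! ### The saddle point -/

/-- A saddle point is the rescaled location `x = k / n > 1` at which, as `n → ∞`, the ratio of
consecutive summands of `rt n` equals one. -/
def IsSaddlePoint (x : ℝ) : Prop := 1 < x ∧ stepNum x 1 0 = stepDen x 1 0

/-- The polynomial vanishing at `x ^ 2 + x` for each saddle point `x`. -/
def saddleCubic (s : ℝ) : ℝ := 2 * s ^ 3 - 2 * s ^ 2 - 4 * s - 1

lemma stepNum_sub_stepDen (x : ℝ) :
    stepNum x 1 0 - stepDen x 1 0 = -2 * (x + 1 / 2) ^ 2 * saddleCubic (x ^ 2 + x) := by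
  unfold stepNum stepDen saddleCubic
  ring

lemma isSaddlePoint_iff {x : ℝ} : IsSaddlePoint x ↔ 1 < x ∧ saddleCubic (x ^ 2 + x) = 0 := by
  refine and_congr_right fun hx => ?_
  rw [← sub_eq_zero, stepNum_sub_stepDen, mul_eq_zero_iff_left]
  exact mul_ne_zero (by norm_num) (by positivity)

lemma exists_isSaddlePoint : ∃ x, IsSaddlePoint x := by
  have continuous : Continuous fun x : ℝ => saddleCubic (x ^ 2 + x) := by
    unfold saddleCubic
    fun_prop
  obtain ⟨x, ⟨hx, -⟩, h⟩ := intermediate_value_Ioo one_le_two continuous.continuousOn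
    (show (0 : ℝ) ∈ Set.Ioo _ _ by norm_num [saddleCubic])
  exact ⟨x, isSaddlePoint_iff.2 ⟨hx, h⟩⟩

lemma saddleCubic_strictMonoOn : StrictMonoOn saddleCubic (Set.Ici 2) := by
  intro s (hs : 2 ≤ s) t (ht : 2 ≤ t) hst
  have factor : 0 < 2 * (t ^ 2 + t * s + s ^ 2) - 2 * (t + s) - 4 := by nlinarith
  have difference : saddleCubic t - saddleCubic s =
      (t - s) * (2 * (t ^ 2 + t * s + s ^ 2) - 2 * (t + s) - 4) := by
    unfold saddleCubic
    ring
  exact sub_pos.1 (difference ▸ mul_pos (sub_pos.2 hst) factor)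

lemma charCubic_strictAntiOn : StrictAntiOn charCubic (Set.Icc 0 1) := by
  rintro a ⟨ha, ha'⟩ b ⟨hb, hb'⟩ hab
  have factor : 0 < 2368 + 188 * (b + a) - (b ^ 2 + b * a + a ^ 2) := by nlinarith
  have difference : charCubic a - charCubic b =
      (b - a) * (2368 + 188 * (b + a) - (b ^ 2 + b * a + a ^ 2)) := by
    unfold charCubic
    ring
  exact sub_pos.1 (difference ▸ mul_pos (sub_pos.2 hab) factor)

namespace IsSaddlePoint

variable {x : ℝ} (hx : IsSaddlePoint x)
include hx

lemma unique {x' : ℝ} (hx' : IsSaddlePoint x') : x = x' := by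
  obtain ⟨h, hroot⟩ := isSaddlePoint_iff.1 hx
  obtain ⟨h', hroot'⟩ := isSaddlePoint_iff.1 hx'
  have hsum : x ^ 2 + x = x' ^ 2 + x' :=
    saddleCubic_strictMonoOn.injOn (Set.mem_Ici.2 (by nlinarith)) (Set.mem_Ici.2 (by nlinarith))
      (hroot.trans hroot'.symm)
  refine mul_left_cancel₀ (show x + x' + 1 ≠ 0 by positivity) (sub_eq_zero.1 ?_)
  nlinarith

lemma indexRatio_mem_Ioo : indexRatio x 1 0 ∈ Set.Ioo 0 1 := by
  obtain ⟨t, ht, rfl⟩ := exists_pos_add_of_lt' hx.1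
  have hden : 0 < (1 + t + 1 / 2) * (1 + t + 1) * (1 + t + 1 + 0) ^ 6 := by positivity
  unfold indexRatio
  rw [Set.mem_Ioo, lt_div_iff₀ hden, div_lt_one hden, ← sub_pos, ← sub_pos (b := _ * _)]
  constructor
  all_goals
    ring_nf
    positivity

-- The right-hand side is the quotient reduced modulo `saddleCubic (x ^ 2 + x) = 0`.
lemma indexRatio_eq :
    indexRatio x 1 0 = 302 + 262 * (x ^ 2 + x) - 196 * (x ^ 2 + x) ^ 2 := by
  obtain ⟨h, hroot⟩ := isSaddlePoint_iff.1 hx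
  unfold saddleCubic at hroot
  unfold indexRatio
  have : 0 < x := one_pos.trans h
  rw [div_eq_iff (by positivity)]
  linear_combination (x + 1 / 2) * (306 + 1152 * x + 1795 * x ^ 2 + 1437 * x ^ 3 + 588 * x ^ 4
    + 98 * x ^ 5) * hroot

lemma charCubic_indexRatio : charCubic (indexRatio x 1 0) = 0 := by
  obtain ⟨-, hroot⟩ := isSaddlePoint_iff.1 hx
  rw [hx.indexRatio_eq]
  generalize x ^ 2 + x = s at hroot
  unfold saddleCubic at hroot
  unfold charCubic
  linear_combination
    (-9682124 - 2586808 * s + 11332720 * s ^ 2 - 3764768 * s ^ 3) * hroot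

lemma eq_indexRatio {l : ℝ} (hl : l ∈ Set.Ioo 0 1) (hroot : charCubic l = 0) :
    l = indexRatio x 1 0 :=
  charCubic_strictAntiOn.injOn (Set.Ioo_subset_Icc_self hl)
    (Set.Ioo_subset_Icc_self hx.indexRatio_mem_Ioo) (hroot.trans hx.charCubic_indexRatio.symm)

end IsSaddlePoint

/-! ### Decay of the series -/

lemma IsSaddlePoint.tendsto_div_of_isPeak {x : ℝ} (hx : IsSaddlePoint x) {K : ℕ → ℕ}
    (hK : ∀ n, 0 < n → IsPeak n (K n)) : Tendsto (fun n => (K n : ℝ) / n) atTop (𝓝 x) := by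
  have continuousNum : Continuous fun p : ℝ × ℝ => stepNum p.1 1 p.2 := by
    unfold stepNum
    fun_prop
  have continuousDen : Continuous fun p : ℝ × ℝ => stepDen p.1 1 p.2 := by
    unfold stepDen
    fun_prop
  have hshift : Continuous fun p : ℝ × ℝ => (p.1 - p.2, p.2) := by fun_prop
  refine tendsto_of_eventually_mem_isClosed (s := Set.Icc 1 2) isCompact_Icc
    ((isClosed_le continuousNum continuousDen).inter
      (isClosed_le (continuousDen.comp hshift) (continuousNum.comp hshift)))
    ?_ tendsto_one_div_atTop_nhds_zero_nat ?_ fun z hz ⟨hle, hge⟩ => ?_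
  · filter_upwards [eventually_gt_atTop 0] with n hn
    exact (hK n hn).div_mem_Icc hn
  · filter_upwards [eventually_gt_atTop 0] with n hn
    exact ⟨(hK n hn).scaled_stepNum_le_stepDen hn, (hK n hn).scaled_stepDen_sub_le_stepNum hn⟩
  · have hcrit : stepNum z 1 0 = stepDen z 1 0 := le_antisymm hle (by simpa using hge)
    refine IsSaddlePoint.unique ⟨hz.1.lt_of_ne' fun hz₁ => ?_, hcrit⟩ hx
    rw [hz₁] at hcrit
    norm_num [stepNum, stepDen] at hcrit

lemma tendsto_indexRatio {K : ℕ → ℕ} {x : ℝ} (hx : 0 < x)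
    (hK : Tendsto (fun n => (K n : ℝ) / n) atTop (𝓝 x)) :
    Tendsto (fun n => indexRatio (K n) n 1) atTop (𝓝 (indexRatio x 1 0)) := by
  have hcont : ContinuousAt (fun p : ℝ × ℝ => indexRatio p.1 1 p.2) (x, 0) := by
    unfold indexRatio
    refine ContinuousAt.div (by fun_prop) (by fun_prop) ?_
    positivity
  refine (hcont.tendsto.comp (hK.prodMk_nhds tendsto_one_div_atTop_nhds_zero_nat)).congr' ?_
  filter_upwards [eventually_ne_atTop 0] with n hn
  have hn' : (n : ℝ) ≠ 0 := Nat.cast_ne_zero.2 hn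
  rw [Function.comp_apply, ← indexRatio_mul hn']
  simp only [mul_div_cancel₀ _ hn', mul_one]

lemma abs_rt {n : ℕ} : |rt n| = ∑' k : ℕ, weight n k / (k : ℝ) ^ 2 := by
  rw [rt_eq_neg_tsum_weight, abs_neg, abs_of_nonneg]
  exact tsum_nonneg fun k => div_nonneg (weight_nonneg n k) (sq_nonneg _)

lemma IsPeak.weight_le_mul_abs_rt {n k : ℕ} (hk : IsPeak n k) :
    weight n k ≤ 4 * (n : ℝ) ^ 2 * |rt n| := by
  have hk₀ : (0 : ℝ) < k := Nat.cast_pos.2 (n.zero_le.trans_lt hk.1)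
  have hk₂ : (k : ℝ) ≤ 2 * n := mod_cast hk.2.1
  have hterm := div_sq_le_tsum_div_sq (weight_nonneg n) hk.2.2 k
  rw [← abs_rt, div_le_iff₀' (by positivity)] at hterm
  calc weight n k ≤ (k : ℝ) ^ 2 * |rt n| := hterm
    _ ≤ (2 * n) ^ 2 * |rt n| := by gcongr
    _ = 4 * (n : ℝ) ^ 2 * |rt n| := by ring

lemma IsPeak.abs_rt_le_mul_weight {n k : ℕ} (hk : IsPeak n k) :
    |rt n| ≤ Real.pi ^ 2 / 6 * weight n k :=
  abs_rt.trans_le (tsum_div_sq_le (weight_nonneg n) hk.2.2)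

theorem IsSaddlePoint.tendsto_log_abs_rt_div {x : ℝ} (hx : IsSaddlePoint x) :
    Tendsto (fun n : ℕ => Real.log |rt n| / n) atTop (𝓝 (Real.log (indexRatio x 1 0))) := by
  choose! K hK using exists_isPeak
  have hKx := hx.tendsto_div_of_isPeak hK
  have hpeak : ∀ᶠ n in atTop, IsPeak n (K n) := (eventually_gt_atTop 0).mono hK
  have hx₀ : 0 < x := one_pos.trans hx.1
  have hratio : Tendsto (fun n => weight (n + 1) (K (n + 1)) / weight n (K n)) atTop
      (𝓝 (indexRatio x 1 0)) :=
    tendsto_ratio_of_isMax weight_nonneg (hpeak.mono fun n h => weight_pos h.1)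
      (hpeak.mono fun n h => h.2.2) (hpeak.mono fun n h => weight_succ_left h.1)
      (.of_forall fun n => weight_succ_left (n.lt_succ_self.trans (hK _ n.succ_pos).1))
      (tendsto_indexRatio hx₀ hKx) (tendsto_indexRatio hx₀ (tendsto_succ_div_of_tendsto_div hKx))
  exact tendsto_log_div_of_polynomially_equivalent four_pos
    (hpeak.mono fun n h => weight_pos h.1) (hpeak.mono fun n h => h.weight_le_mul_abs_rt)
    (hpeak.mono fun n h => h.abs_rt_le_mul_weight)
    (tendsto_log_div_of_tendsto_ratio hx.indexRatio_mem_Ioo.1.ne' hratio)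

/-- `lim (log |r̃_n|)/n = log λ₁` and
`lim (log |ũ_n|)/n = lim (log |w̃_n|)/n = lim (log |ṽ_n|)/n = log λ₃`, where `λ₁` is the
unique root of `λ³ − 188λ² − 2368λ + 4` in `(0, 1)` and `λ₃` its unique root greater
than `1`. -/
theorem stmt15
    (ut wt vt : ℕ → ℚ)
    (hut : Rec3 ut) (hwt : Rec3 wt) (hvt : Rec3 vt)
    (hut0 : ut 0 = 0) (hut1 : ut 1 = 2) (hut2 : ut 2 = 552)
    (hwt0 : wt 0 = 1) (hwt1 : wt 1 = 12) (hwt2 : wt 2 = 1764)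
    (hvt0 : vt 0 = 0) (hvt1 : vt 1 = 33/2) (hvt2 : vt 2 = 43085/16)
    (lam1 : ℝ) (hlam1root : lam1^3 - 188*lam1^2 - 2368*lam1 + 4 = 0)
    (hlam1mem : lam1 ∈ Set.Ioo (0 : ℝ) 1)
    (lam3 : ℝ) (hlam3root : lam3^3 - 188*lam3^2 - 2368*lam3 + 4 = 0)
    (hlam3mem : 1 < lam3) :
    Tendsto (fun n : ℕ => Real.log |rt n| / (n : ℝ)) atTop (nhds (Real.log lam1)) ∧
    Tendsto (fun n : ℕ => Real.log |(ut n : ℝ)| / (n : ℝ)) atTop (nhds (Real.log lam3)) ∧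
    Tendsto (fun n : ℕ => Real.log |(wt n : ℝ)| / (n : ℝ)) atTop (nhds (Real.log lam3)) ∧
    Tendsto (fun n : ℕ => Real.log |(vt n : ℝ)| / (n : ℝ)) atTop (nhds (Real.log lam3)) := by
  obtain ⟨x, hx⟩ := exists_isSaddlePoint
  rw [hx.eq_indexRatio hlam1mem hlam1root]
  refine ⟨hx.tendsto_log_abs_rt_div, hut.tendsto_log_abs_div hlam3root hlam3mem ?_ ?_ ?_,
    hwt.tendsto_log_abs_div hlam3root hlam3mem ?_ ?_ ?_,
    hvt.tendsto_log_abs_div hlam3root hlam3mem ?_ ?_ ?_⟩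
  all_goals norm_num [*]
end
end
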